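/- Consider on a space-time neighbourhood of a point y⁰ = (t⁰,x⁰) with 0 < x₃⁰ < 1 the system ∂_t ψ + Δψ + div(ψ v) = w₃, −Δw + A q = ψ A T, A* w = 0, where A f = R∇f for a constant orthogonal matrix R, A* z = −div(Rᵗ z), and v, T belong to C([−t₀,t₀], H³). Then for any smooth function σ(t,x) defined near y⁰ with σ(y⁰) = 0 and ∇_x σ(y⁰) ≠ 0, there are ε, r ∈ (0,1) with the following property: if ψ(t,x) = 0 for all (t,x) in {σ < 0} ∩ W_r(y⁰), then ψ ≡ 0 on B_ε(y⁰). Here W_r(y⁰) = {(t,x) : |t−t⁰| ≤ r², |x−x⁰| ≤ r} and B_ε(y⁰) = {(t,x) : |(t,x)−y⁰| ≤ ε}. -/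

import Mathlib

open Set MeasureTheory

noncomputable section

/-- Points of `ℝ³`. -/
abbrev E3 : Type := EuclideanSpace ℝ (Fin 3)

/-- The partial derivative `∂_i f` of a scalar function on `ℝ³`. -/
noncomputable def pd (i : Fin 3) (f : E3 → ℝ) (x : E3) : ℝ :=
  fderiv ℝ f x (EuclideanSpace.single i (1 : ℝ))

/-- The spatial partial derivative `∂_i f(t, ·)` of a function of `(t, x)`. -/
noncomputable def pdx (i : Fin 3) (f : ℝ × E3 → ℝ) (p : ℝ × E3) : ℝ :=
  pd i (fun y => f (p.1, y)) p.2

/-- The time derivative `∂_t f` of a function of `(t, x)`. -/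
noncomputable def pdt (f : ℝ × E3 → ℝ) (p : ℝ × E3) : ℝ :=
  deriv (fun s => f (s, p.2)) p.1

/-- The spatial Laplacian `Δf(t, ·)` of a function of `(t, x)`. -/
noncomputable def laplx (f : ℝ × E3 → ℝ) (p : ℝ × E3) : ℝ :=
  ∑ i : Fin 3, pd i (fun y => pd i (fun z => f (p.1, z)) y) p.2

/-- The parabolic cylinder `W_r(y⁰) = {(t,x) : |t−t⁰| ≤ r², |x−x⁰| ≤ r}`
(maximum norm in `x`). -/
def cylW (r : ℝ) (y0 : ℝ × E3) : Set (ℝ × E3) :=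
  {p | |p.1 - y0.1| ≤ r ^ 2 ∧ ∀ i : Fin 3, |p.2 i - y0.2 i| ≤ r}

/-- The ball `B_ε(y⁰) = {y : |y − y⁰| ≤ ε}` for the maximum norm on `ℝ⁴`. -/
def ballB (ε : ℝ) (y0 : ℝ × E3) : Set (ℝ × E3) :=
  {p | |p.1 - y0.1| ≤ ε ∧ ∀ i : Fin 3, |p.2 i - y0.2 i| ≤ ε}

/-!
By orthogonality of `R`, the Stokes equation reads `Δ(Rᵗw) = ∇q - ψ∇T`, and taking the divergence
gives `Δq = div(ψ∇T)`. Hence `∇ψ`, `ψ`, `w₃` and the third component of `R∇q` satisfy a system of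
differential inequalities `|(Δ + κ∂ₜ)f|² ≤ C ∑ (|f_l|² + |∇f_l|²)`, with `κ = 1` for the first two
and `κ = 0` for the last two. All four vanish where `ψ` vanishes on an open set, the heat equation
giving `w₃ = 0` there and the Stokes equation then `(R∇q)₃ = 0`.

Both kinds of operator obey a Carleman estimate with a common weight `e^{τφ}`, where `φ` is a
quadratic polynomial. Since its Hessian is constant, the commutator of the symmetric and the
antisymmetric part of the conjugated operator is explicit; it is positive once the Hessian is large
in the direction of `∇σ`. A negative multiple of the Euclidean form is added so that `φ` is negative
on `{0 ≤ σ}` away from `y⁰`. Applied to the unknowns times a cutoff, the estimate leaves only terms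
supported where `φ` is bounded above by a negative constant, and `τ → ∞` forces the unknowns to
vanish near `y⁰`.
-/

open Filter
open scoped Topology

section DirDeriv

variable {E : Type*} [NormedAddCommGroup E] [NormedSpace ℝ E]

/-- The directional derivative `∂_v f`, with the direction as first argument so that it can be
iterated as an operator on functions. -/
def dirDeriv (v : E) (f : E → ℝ) (p : E) : ℝ := fderiv ℝ f p v

variable {f g : E → ℝ} {p v w : E} {k : ℕ}

lemma contDiffAt_dirDeriv (hf : ContDiffAt ℝ (k + 1) f p) (v : E) :
    ContDiffAt ℝ k (dirDeriv v f) p :=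
  (hf.fderiv_right (m := k) le_rfl).clm_apply contDiffAt_const

lemma contDiff_dirDeriv (hf : ContDiff ℝ (k + 1) f) (v : E) : ContDiff ℝ k (dirDeriv v f) :=
  contDiff_iff_contDiffAt.2 fun _ => contDiffAt_dirDeriv hf.contDiffAt v

lemma dirDeriv_congr (h : f =ᶠ[𝓝 p] g) (v : E) : dirDeriv v f =ᶠ[𝓝 p] dirDeriv v g := by
  filter_upwards [h.eventuallyEq_nhds] with x hx
  rw [dirDeriv, hx.fderiv_eq, dirDeriv]

lemma dirDeriv_const (c : ℝ) : dirDeriv v (fun _ => c) p = 0 := by simp [dirDeriv]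

lemma dirDeriv_add (hf : DifferentiableAt ℝ f p) (hg : DifferentiableAt ℝ g p) :
    dirDeriv v (fun x => f x + g x) p = dirDeriv v f p + dirDeriv v g p := by
  simp [dirDeriv, fderiv_fun_add hf hg]

lemma dirDeriv_sub (hf : DifferentiableAt ℝ f p) (hg : DifferentiableAt ℝ g p) :
    dirDeriv v (fun x => f x - g x) p = dirDeriv v f p - dirDeriv v g p := by
  simp [dirDeriv, fderiv_fun_sub hf hg]

lemma dirDeriv_mul (hf : DifferentiableAt ℝ f p) (hg : DifferentiableAt ℝ g p) :
    dirDeriv v (fun x => f x * g x) p = f p * dirDeriv v g p + g p * dirDeriv v f p := by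
  simp [dirDeriv, fderiv_fun_mul hf hg]

lemma dirDeriv_sum {ι : Type*} {s : Finset ι} {F : ι → E → ℝ}
    (hF : ∀ i ∈ s, DifferentiableAt ℝ (F i) p) :
    dirDeriv v (fun x => ∑ i ∈ s, F i x) p = ∑ i ∈ s, dirDeriv v (F i) p := by
  simp [dirDeriv, fderiv_fun_sum hF]

lemma dirDeriv_comm (hf : ContDiffAt ℝ 2 f p) (v w : E) :
    dirDeriv v (dirDeriv w f) p = dirDeriv w (dirDeriv v f) p := by
  have hdiff : DifferentiableAt ℝ (fderiv ℝ f) p :=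
    (hf.fderiv_right (m := 1) (by norm_num)).differentiableAt one_ne_zero
  have second (a b : E) : dirDeriv a (dirDeriv b f) p = fderiv ℝ (fderiv ℝ f) p a b := by
    change fderiv ℝ (fun x => fderiv ℝ f x b) p a = _
    simp [fderiv_clm_apply hdiff (differentiableAt_const b)]
  rw [second, second]
  exact hf.isSymmSndFDerivAt (by simp) v w

lemma tsupport_dirDeriv_subset (v : E) : tsupport (dirDeriv v f) ⊆ tsupport f :=
  tsupport_fderiv_apply_subset ℝ v

lemma dirDeriv_eq_zero_of_notMem_tsupport (hp : p ∉ tsupport f) : dirDeriv v f p = 0 :=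
  image_eq_zero_of_notMem_tsupport fun h => hp (tsupport_dirDeriv_subset v h)

lemma hasCompactSupport_dirDeriv (hf : HasCompactSupport f) (v : E) :
    HasCompactSupport (dirDeriv v f) :=
  hf.fderiv_apply (𝕜 := ℝ) v

end DirDeriv

/-- Space-time `ℝ × ℝⁿ`, with points written `(t, x)`. -/
abbrev SpaceTime (n : ℕ) : Type := ℝ × EuclideanSpace ℝ (Fin n)

/-- The unit vector of the time direction. -/
def timeVec {n : ℕ} : SpaceTime n := (1, 0)

/-- The unit vector of the `i`-th space direction. -/
def spaceVec {n : ℕ} (i : Fin n) : SpaceTime n := (0, EuclideanSpace.single i 1)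

local notation "∂ₜ" => dirDeriv timeVec
local notation:max "∂ₓ[" i "]" => dirDeriv (spaceVec i)

section HeatOperator

variable {n : ℕ}

/-- The Laplacian `Δu` in the space variables. -/
def lap (u : SpaceTime n → ℝ) (p : SpaceTime n) : ℝ := ∑ i, ∂ₓ[i] (∂ₓ[i] u) p

/-- The operator `Δ + κ ∂ₜ`: the backward heat operator for `κ = 1`, the Laplacian on time slices
for `κ = 0`. -/
def heatOp (κ : ℝ) (u : SpaceTime n → ℝ) (p : SpaceTime n) : ℝ := lap u p + κ * ∂ₜ u p

/-- The squared length `|∇u|²` of the gradient in the space variables. -/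
def gradSq (u : SpaceTime n → ℝ) (p : SpaceTime n) : ℝ := ∑ i, ∂ₓ[i] u p ^ 2

/-- The density `u² + |∇u|²`. -/
def energy (u : SpaceTime n → ℝ) (p : SpaceTime n) : ℝ := u p ^ 2 + gradSq u p

variable {u f g : SpaceTime n → ℝ} {p : SpaceTime n} {κ : ℝ}

lemma lap_congr (h : f =ᶠ[𝓝 p] g) : lap f =ᶠ[𝓝 p] lap g := by
  have hi (i : Fin n) := dirDeriv_congr (dirDeriv_congr h (spaceVec i)) (spaceVec i)
  filter_upwards [eventually_all.2 hi] with x hx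
  simp only [lap, hx]

lemma heatOp_congr (h : f =ᶠ[𝓝 p] g) (κ : ℝ) : heatOp κ f =ᶠ[𝓝 p] heatOp κ g := by
  filter_upwards [lap_congr h, dirDeriv_congr h timeVec] with x h₁ h₂
  simp only [heatOp, h₁, h₂]

lemma energy_congr (h : f =ᶠ[𝓝 p] g) : energy f =ᶠ[𝓝 p] energy g := by
  filter_upwards [h, eventually_all.2 fun i => dirDeriv_congr h (spaceVec i)] with x h₁ h₂
  simp only [energy, gradSq, h₁, h₂]

lemma lap_eq_zero_of_notMem_tsupport (hp : p ∉ tsupport u) : lap u p = 0 :=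
  Finset.sum_eq_zero fun _ _ =>
    dirDeriv_eq_zero_of_notMem_tsupport fun h => hp (tsupport_dirDeriv_subset _ h)

lemma heatOp_eq_zero_of_notMem_tsupport (hp : p ∉ tsupport u) : heatOp κ u p = 0 := by
  simp [heatOp, lap_eq_zero_of_notMem_tsupport hp, dirDeriv_eq_zero_of_notMem_tsupport hp]

lemma gradSq_eq_zero_of_notMem_tsupport (hp : p ∉ tsupport u) : gradSq u p = 0 :=
  Finset.sum_eq_zero fun _ _ => by rw [dirDeriv_eq_zero_of_notMem_tsupport hp, sq, zero_mul]

lemma energy_eq_zero_of_notMem_tsupport (hp : p ∉ tsupport u) : energy u p = 0 := by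
  simp [energy, gradSq_eq_zero_of_notMem_tsupport hp, image_eq_zero_of_notMem_tsupport hp]

lemma continuous_lap (hu : ContDiff ℝ 2 u) : Continuous (lap u) :=
  continuous_finsetSum _ fun i _ => (contDiff_dirDeriv (k := 0)
    (by simpa using contDiff_dirDeriv (k := 1) hu (spaceVec i)) (spaceVec i)).continuous

lemma continuous_heatOp (hu : ContDiff ℝ 2 u) : Continuous (heatOp κ u) :=
  (continuous_lap hu).add
    (continuous_const.mul (contDiff_dirDeriv (k := 1) hu timeVec).continuous)

lemma continuous_gradSq (hu : ContDiff ℝ 1 u) : Continuous (gradSq u) :=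
  continuous_finsetSum _ fun i _ =>
    (contDiff_dirDeriv (k := 0) (by simpa using hu) (spaceVec i)).continuous.pow 2

lemma continuous_energy (hu : ContDiff ℝ 1 u) : Continuous (energy u) :=
  (hu.continuous.pow 2).add (continuous_gradSq hu)

lemma gradSq_nonneg : 0 ≤ gradSq u p := Finset.sum_nonneg fun _ _ => sq_nonneg _

lemma sq_le_energy : u p ^ 2 ≤ energy u p := le_add_of_nonneg_right gradSq_nonneg

lemma energy_nonneg : 0 ≤ energy u p := (sq_nonneg _).trans sq_le_energy

lemma sq_dirDeriv_le_energy (i : Fin n) : ∂ₓ[i] u p ^ 2 ≤ energy u p :=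
  (Finset.single_le_sum (f := fun i => ∂ₓ[i] u p ^ 2) (fun _ _ => sq_nonneg _)
    (Finset.mem_univ i)).trans (le_add_of_nonneg_left (sq_nonneg _))

end HeatOperator

section ZeroMean

/-- The functions that are integrable with integral zero; in Carleman identities they play the role
of the divergence terms. -/
def zeroMean {E : Type*} [MeasurableSpace E] (μ : Measure E) : Submodule ℝ (E → ℝ) where
  carrier := {F | Integrable F μ ∧ ∫ x, F x ∂μ = 0}
  add_mem' := fun hF hG => ⟨hF.1.add hG.1, by simp [integral_add hF.1 hG.1, hF.2, hG.2]⟩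
  zero_mem' := ⟨integrable_zero _ _ _, by simp⟩
  smul_mem' := fun c _ hF => ⟨hF.1.smul c, by simp [integral_const_mul, hF.2]⟩

lemma integral_le_integral_of_add_zeroMean_le {E : Type*} [MeasurableSpace E] {μ : Measure E}
    {D L F : E → ℝ} (hD : D ∈ zeroMean μ) (hL : Integrable L μ) (hF : Integrable F μ)
    (h : ∀ x, L x + D x ≤ F x) : ∫ x, L x ∂μ ≤ ∫ x, F x ∂μ := by
  simpa [integral_add hL hD.1, hD.2] using integral_mono (hL.add hD.1) hF h

variable {E : Type*} [NormedAddCommGroup E] [NormedSpace ℝ E] [FiniteDimensional ℝ E]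
  [MeasurableSpace E] [BorelSpace E] {μ : Measure E} [μ.IsAddHaarMeasure]
  {a f u V : E → ℝ} {α β : ℝ}

lemma dirDeriv_mem_zeroMean (hf : ContDiff ℝ 1 f) (hc : HasCompactSupport f) (v : E) :
    dirDeriv v f ∈ zeroMean μ := by
  have hint : Integrable (dirDeriv v f) μ :=
    (contDiff_dirDeriv (k := 0) (by simpa using hf) v).continuous.integrable_of_hasCompactSupport
      (hasCompactSupport_dirDeriv hc v)
  have hparts := integral_mul_fderiv_eq_neg_fderiv_mul_of_integrable (μ := μ)
    (f := fun _ => (1 : ℝ)) (g := f) (v := v) (by simp) (by simpa [dirDeriv] using! hint)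
    (by simpa using hf.continuous.integrable_of_hasCompactSupport hc)
    (by fun_prop) (fun x _ => hf.differentiable one_ne_zero x)
  exact ⟨hint, by simpa [dirDeriv] using hparts⟩

lemma mul_dirDeriv_dirDeriv_add_sq_mem_zeroMean (hu : ContDiff ℝ 2 u) (hc : HasCompactSupport u)
    (v : E) : (fun p => u p * dirDeriv v (dirDeriv v u) p + dirDeriv v u p ^ 2) ∈ zeroMean μ := by
  have hv : ContDiff ℝ 1 (dirDeriv v u) := contDiff_dirDeriv (k := 1) hu v
  have hu' := hu.differentiable two_ne_zero
  have hv' := hv.differentiable one_ne_zero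
  have hflux := dirDeriv_mem_zeroMean (μ := μ) (f := fun p => u p * dirDeriv v u p)
    ((hu.of_le (by norm_num)).mul hv) hc.mul_right v
  convert hflux using 2 with p
  rw [dirDeriv_mul (hu' p) (hv' p)]
  ring

lemma mul_mul_transport_mem_zeroMean {w : E} (hu : ContDiff ℝ 2 u) (hc : HasCompactSupport u)
    (hV : ContDiff ℝ 1 V) (ha : ContDiff ℝ 1 a) (haw : ∀ p, dirDeriv w a p = β) :
    (fun p => V p * u p * (2 * a p * dirDeriv w u p + β * u p) + dirDeriv w V p * a p * u p ^ 2) ∈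
      zeroMean μ := by
  have hu₁ : ContDiff ℝ 1 u := hu.of_le (by norm_num)
  have hu' := hu₁.differentiable one_ne_zero
  have hV' := hV.differentiable one_ne_zero
  have ha' := ha.differentiable one_ne_zero
  have hflux := dirDeriv_mem_zeroMean (μ := μ) (f := fun p => V p * a p * (u p * u p))
    ((hV.mul ha).mul (hu₁.mul hu₁)) hc.mul_right.mul_left w
  convert hflux using 2 with p
  simp (disch := fun_prop) only [dirDeriv_mul, haw]
  ring

lemma dirDeriv_dirDeriv_mul_transport_mem_zeroMean {v w : E} (hu : ContDiff ℝ 2 u)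
    (hc : HasCompactSupport u) (ha : ContDiff ℝ 1 a) (hav : ∀ p, dirDeriv v a p = α)
    (haw : ∀ p, dirDeriv w a p = β) :
    (fun p => dirDeriv v (dirDeriv v u) p * (2 * a p * dirDeriv w u p + β * u p)
      + 2 * α * dirDeriv v u p * dirDeriv w u p) ∈ zeroMean μ := by
  have hD (z : E) : ContDiff ℝ 1 (dirDeriv z u) := contDiff_dirDeriv (k := 1) hu z
  have hu₁ : ContDiff ℝ 1 u := hu.of_le (by norm_num)
  have hu' := hu₁.differentiable one_ne_zero
  have hv' := (hD v).differentiable one_ne_zero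
  have hw' := (hD w).differentiable one_ne_zero
  have ha' := ha.differentiable one_ne_zero
  have hcv := hasCompactSupport_dirDeriv hc v
  have flux₁ := dirDeriv_mem_zeroMean (μ := μ)
    (f := fun p => 2 * (a p * (dirDeriv v u p * dirDeriv w u p)))
    (contDiff_const.mul (ha.mul ((hD v).mul (hD w)))) hcv.mul_right.mul_left.mul_left v
  have flux₂ := dirDeriv_mem_zeroMean (μ := μ)
    (f := fun p => a p * (dirDeriv v u p * dirDeriv v u p))
    (ha.mul ((hD v).mul (hD v))) hcv.mul_right.mul_left w
  have flux₃ := dirDeriv_mem_zeroMean (μ := μ) (f := fun p => β * (u p * dirDeriv v u p))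
    (contDiff_const.mul (hu₁.mul (hD v))) hc.mul_right.mul_left v
  convert add_mem (sub_mem flux₁ flux₂) flux₃ using 2 with p
  have hcomm := dirDeriv_comm (hu.contDiffAt (x := p)) v w
  simp (disch := fun_prop) only [Pi.add_apply, Pi.sub_apply, dirDeriv_mul, dirDeriv_const, hav,
    haw, hcomm]
  ring

end ZeroMean

section Conjugation

variable {n : ℕ} {κ τ : ℝ} {φ u g : SpaceTime n → ℝ} {p v : SpaceTime n}

/-- The zeroth order coefficient of `e^{τφ} (Δ + κ ∂ₜ) e^{-τφ}`, up to the term `-τ Δφ`, which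
belongs to the antisymmetric part. -/
def potential (κ τ : ℝ) (φ : SpaceTime n → ℝ) (p : SpaceTime n) : ℝ :=
  τ ^ 2 * gradSq φ p - κ * τ * ∂ₜ φ p

/-- The formally symmetric part of `e^{τφ} (Δ + κ ∂ₜ) e^{-τφ}`. -/
def symPart (κ τ : ℝ) (φ u : SpaceTime n → ℝ) (p : SpaceTime n) : ℝ :=
  lap u p + potential κ τ φ p * u p

/-- The formally antisymmetric part of `e^{τφ} (Δ + κ ∂ₜ) e^{-τφ}`. -/
def antiPart (κ τ : ℝ) (φ u : SpaceTime n → ℝ) (p : SpaceTime n) : ℝ :=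
  κ * ∂ₜ u p - τ * ∑ i, (2 * ∂ₓ[i] φ p * ∂ₓ[i] u p + ∂ₓ[i] (∂ₓ[i] φ) p * u p)

lemma dirDeriv_exp_mul (hφ : DifferentiableAt ℝ φ p) (hg : DifferentiableAt ℝ g p) :
    dirDeriv v (fun x => Real.exp (τ * φ x) * g x) p =
      Real.exp (τ * φ p) * (τ * dirDeriv v φ p * g p + dirDeriv v g p) := by
  have hexp : dirDeriv v (fun x => Real.exp (τ * φ x)) p =
      Real.exp (τ * φ p) * (τ * dirDeriv v φ p) := by
    simp [dirDeriv, fderiv_exp (hφ.const_mul τ), fderiv_const_mul hφ]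
  rw [dirDeriv_mul (by fun_prop) hg, hexp]
  ring

lemma symPart_add_antiPart_exp_mul (hφ : ContDiff ℝ 2 φ) (hg : ContDiff ℝ 2 g)
    (p : SpaceTime n) :
    symPart κ τ φ (fun x => Real.exp (τ * φ x) * g x) p +
        antiPart κ τ φ (fun x => Real.exp (τ * φ x) * g x) p =
      Real.exp (τ * φ p) * heatOp κ g p := by
  have hφ' := hφ.differentiable two_ne_zero
  have hg' := hg.differentiable two_ne_zero
  have hDφ (i : Fin n) := (contDiff_dirDeriv (k := 1) hφ (spaceVec i)).differentiable one_ne_zero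
  have hDg (i : Fin n) := (contDiff_dirDeriv (k := 1) hg (spaceVec i)).differentiable one_ne_zero
  have first (v : SpaceTime n) : dirDeriv v (fun x => Real.exp (τ * φ x) * g x) =
      fun x => Real.exp (τ * φ x) * (τ * dirDeriv v φ x * g x + dirDeriv v g x) :=
    funext fun x => dirDeriv_exp_mul (hφ' x) (hg' x)
  have second (i : Fin n) : ∂ₓ[i] (∂ₓ[i] fun x => Real.exp (τ * φ x) * g x) p =
      Real.exp (τ * φ p) * (τ ^ 2 * ∂ₓ[i] φ p ^ 2 * g p + 2 * τ * ∂ₓ[i] φ p * ∂ₓ[i] g p +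
        τ * ∂ₓ[i] (∂ₓ[i] φ) p * g p + ∂ₓ[i] (∂ₓ[i] g) p) := by
    have := hDφ i
    have := hDg i
    rw [first, dirDeriv_exp_mul (hφ' p) (by fun_prop)]
    simp (disch := fun_prop) only [dirDeriv_add, dirDeriv_mul, dirDeriv_const]
    ring
  have spatial : lap (fun x => Real.exp (τ * φ x) * g x) p
      + τ ^ 2 * gradSq φ p * (Real.exp (τ * φ p) * g p)
      - τ * ∑ i, (2 * ∂ₓ[i] φ p * ∂ₓ[i] (fun x => Real.exp (τ * φ x) * g x) p
        + ∂ₓ[i] (∂ₓ[i] φ) p * (Real.exp (τ * φ p) * g p)) = Real.exp (τ * φ p) * lap g p := by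
    simp only [lap, gradSq, second, Finset.mul_sum, Finset.sum_mul, ← Finset.sum_add_distrib,
      ← Finset.sum_sub_distrib]
    refine Finset.sum_congr rfl fun i _ => ?_
    rw [first]
    ring
  have time := dirDeriv_exp_mul (τ := τ) (v := timeVec) (hφ' p) (hg' p)
  simp only [symPart, antiPart, potential, heatOp]
  linear_combination spatial + κ * time

end Conjugation

section CarlemanIdentity

variable {n : ℕ} {κ τ : ℝ} {φ u : SpaceTime n → ℝ} {B : SpaceTime n → SpaceTime n → ℝ}

/-- `φ` is of class `C²` with constant second derivatives `∂_v ∂_w φ = B v w`. -/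
structure HasConstHessian (φ : SpaceTime n → ℝ) (B : SpaceTime n → SpaceTime n → ℝ) : Prop where
  contDiff : ContDiff ℝ 2 φ
  dirDeriv_dirDeriv : ∀ v w p, dirDeriv v (dirDeriv w φ) p = B v w

/-- The value of the form `B` on the spatial gradient of `u`. -/
def gradForm (B : SpaceTime n → SpaceTime n → ℝ) (u : SpaceTime n → ℝ) (p : SpaceTime n) : ℝ :=
  ∑ i, ∑ j, B (spaceVec i) (spaceVec j) * ∂ₓ[i] u p * ∂ₓ[j] u p

/-- The mixed term `∇φ · ∂ₜ∇φ`, for a weight `φ` with Hessian `B`. -/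
def gradTimeForm (B : SpaceTime n → SpaceTime n → ℝ) (φ : SpaceTime n → ℝ) (p : SpaceTime n) : ℝ :=
  ∑ i, B timeVec (spaceVec i) * ∂ₓ[i] φ p

instance isAddHaarMeasure_volume_spaceTime :
    (volume : Measure (SpaceTime n)).IsAddHaarMeasure :=
  inferInstanceAs ((volume : Measure ℝ).prod
    (volume : Measure (EuclideanSpace ℝ (Fin n)))).IsAddHaarMeasure

namespace HasConstHessian

variable (hφ : HasConstHessian φ B)
include hφ

lemma symm (v w : SpaceTime n) : B v w = B w v := by
  rw [← hφ.dirDeriv_dirDeriv v w 0, ← hφ.dirDeriv_dirDeriv w v 0,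
    dirDeriv_comm hφ.contDiff.contDiffAt]

lemma contDiff_dirDeriv_weight (v : SpaceTime n) : ContDiff ℝ 1 (dirDeriv v φ) :=
  contDiff_dirDeriv (k := 1) hφ.contDiff v

lemma contDiff_potential : ContDiff ℝ 1 (potential κ τ φ) := by
  have := hφ.contDiff_dirDeriv_weight
  unfold potential gradSq
  fun_prop

lemma dirDeriv_potential (v p : SpaceTime n) :
    dirDeriv v (potential κ τ φ) p =
      2 * τ ^ 2 * ∑ i, ∂ₓ[i] φ p * B v (spaceVec i) - κ * τ * B v timeVec := by
  have hD (z : SpaceTime n) := (hφ.contDiff_dirDeriv_weight z).differentiable one_ne_zero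
  unfold potential gradSq
  simp only [sq (∂ₓ[_] φ _)]
  simp (disch := fun_prop) only [dirDeriv_sub, dirDeriv_mul, dirDeriv_const, dirDeriv_sum,
    hφ.dirDeriv_dirDeriv]
  simp only [← two_mul, ← Finset.mul_sum]
  ring

lemma dirDeriv_timeVec_potential (p : SpaceTime n) :
    ∂ₜ (potential κ τ φ) p = 2 * τ ^ 2 * gradTimeForm B φ p - κ * τ * B timeVec timeVec := by
  simp only [hφ.dirDeriv_potential, gradTimeForm, mul_comm (B _ _)]

lemma sum_dirDeriv_potential_mul (p : SpaceTime n) :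
    ∑ j, ∂ₓ[j] (potential κ τ φ) p * ∂ₓ[j] φ p =
      2 * τ ^ 2 * gradForm B φ p - κ * τ * gradTimeForm B φ p := by
  simp only [hφ.dirDeriv_potential, hφ.symm _ timeVec, gradForm, gradTimeForm]
  rw [Finset.mul_sum, Finset.mul_sum, ← Finset.sum_sub_distrib]
  refine Finset.sum_congr rfl fun j _ => ?_
  rw [sub_mul, Finset.mul_sum, Finset.mul_sum, Finset.sum_mul]
  congr 1
  · exact Finset.sum_congr rfl fun i _ => by ring
  · ring

end HasConstHessian

lemma mul_symPart_mem_zeroMean (hu : ContDiff ℝ 2 u)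
    (hc : HasCompactSupport u) :
    (fun p => u p * symPart κ τ φ u p + gradSq u p - potential κ τ φ p * u p ^ 2) ∈
      zeroMean volume := by
  convert sum_mem (t := Finset.univ) fun i _ => mul_dirDeriv_dirDeriv_add_sq_mem_zeroMean
    (μ := volume) hu hc (spaceVec i) using 2 with p
  simp only [symPart, potential, gradSq, lap, Finset.sum_apply, Finset.sum_add_distrib,
    ← Finset.mul_sum]
  ring

lemma lap_mul_antiPart_mem_zeroMean (hφ : HasConstHessian φ B) (hu : ContDiff ℝ 2 u)
    (hc : HasCompactSupport u) :
    (fun p => lap u p * antiPart κ τ φ u p - 2 * τ * gradForm B u p) ∈ zeroMean volume := by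
  have hspace (i j : Fin n) := dirDeriv_dirDeriv_mul_transport_mem_zeroMean (μ := volume)
    (v := spaceVec i) (w := spaceVec j) hu hc (hφ.contDiff_dirDeriv_weight (spaceVec j))
    (hφ.dirDeriv_dirDeriv _ _) (hφ.dirDeriv_dirDeriv _ _)
  have htime (i : Fin n) := dirDeriv_dirDeriv_mul_transport_mem_zeroMean (μ := volume)
    (v := spaceVec i) (w := timeVec) hu hc (contDiff_const (c := 1)) (fun _ => dirDeriv_const _)
    (fun _ => dirDeriv_const _)
  convert sum_mem (t := Finset.univ) fun i _ =>
    sub_mem ((zeroMean volume).smul_mem (κ / 2) (htime i))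
      ((zeroMean volume).smul_mem τ (sum_mem (t := Finset.univ) fun j _ => hspace i j))
    using 2 with p
  simp only [Finset.sum_apply, Pi.sub_apply, Pi.smul_apply, smul_eq_mul, lap, antiPart, gradForm,
    hφ.dirDeriv_dirDeriv]
  rw [Finset.sum_mul, Finset.mul_sum (a := 2 * τ), ← Finset.sum_sub_distrib]
  refine Finset.sum_congr rfl fun i _ => ?_
  simp only [Finset.sum_add_distrib, ← Finset.mul_sum, mul_assoc]
  ring

lemma potential_mul_antiPart_mem_zeroMean (hφ : HasConstHessian φ B) (hu : ContDiff ℝ 2 u)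
    (hc : HasCompactSupport u) :
    (fun p => 2 * (potential κ τ φ p * u p * antiPart κ τ φ u p)
      - (4 * τ ^ 3 * gradForm B φ p - 4 * κ * τ ^ 2 * gradTimeForm B φ p
        + κ ^ 2 * τ * B timeVec timeVec) * u p ^ 2) ∈ zeroMean volume := by
  have hspace (j : Fin n) := mul_mul_transport_mem_zeroMean (μ := volume)
    (w := spaceVec j) hu hc (hφ.contDiff_potential (κ := κ) (τ := τ))
    (hφ.contDiff_dirDeriv_weight (spaceVec j)) (hφ.dirDeriv_dirDeriv _ _)
  have htime := mul_mul_transport_mem_zeroMean (μ := volume) (w := timeVec) hu hc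
    (hφ.contDiff_potential (κ := κ) (τ := τ)) (contDiff_const (c := 1)) (fun _ => dirDeriv_const _)
  convert sub_mem ((zeroMean volume).smul_mem κ htime)
    ((zeroMean volume).smul_mem (2 * τ) (sum_mem (t := Finset.univ) fun j _ => hspace j))
    using 2 with p
  simp only [Finset.sum_apply, Pi.sub_apply, Pi.smul_apply, smul_eq_mul, antiPart,
    hφ.dirDeriv_dirDeriv, hφ.dirDeriv_timeVec_potential]
  simp only [Finset.sum_add_distrib, ← Finset.mul_sum, ← Finset.sum_mul,
    hφ.sum_dirDeriv_potential_mul]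
  ring

end CarlemanIdentity

section CarlemanInequality

variable {n : ℕ} {κ τ lam c₀ b d : ℝ} {φ u : SpaceTime n → ℝ} {B : SpaceTime n → SpaceTime n → ℝ}
  {N : Set (SpaceTime n)}

lemma sq_symPart_add_antiPart_sub_mem_zeroMean (hφ : HasConstHessian φ B) (hu : ContDiff ℝ 2 u)
    (hc : HasCompactSupport u) (M : ℝ) :
    (fun p => (symPart κ τ φ u p + antiPart κ τ φ u p) ^ 2
      - (symPart κ τ φ u p ^ 2 + antiPart κ τ φ u p ^ 2 + M * τ * u p * symPart κ τ φ u p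
        + 4 * τ * gradForm B u p + M * τ * gradSq u p
        + (τ ^ 3 * (4 * gradForm B φ p - M * gradSq φ p)
          - τ ^ 2 * κ * (4 * gradTimeForm B φ p - M * ∂ₜ φ p)
          + κ ^ 2 * τ * B timeVec timeVec) * u p ^ 2)) ∈ zeroMean volume := by
  convert sub_mem
    (add_mem
      ((zeroMean volume).smul_mem 2 (lap_mul_antiPart_mem_zeroMean (κ := κ) (τ := τ) hφ hu hc))
      (potential_mul_antiPart_mem_zeroMean (κ := κ) (τ := τ) hφ hu hc))
    ((zeroMean volume).smul_mem (M * τ)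
      (mul_symPart_mem_zeroMean (κ := κ) (τ := τ) (φ := φ) hu hc)) using 2 with p
  simp only [Pi.add_apply, Pi.sub_apply, Pi.smul_apply, smul_eq_mul, symPart]
  rw [potential]
  ring

/-- The negative contribution `-λ|∇u|²` of the Hessian is beaten by adding a multiple of
`u · symPart u`, which costs only a term of lower order in `τ`. -/
lemma carleman_density_lower_bound {S A x G F X Y h : ℝ} (hκ : κ ∈ Icc (0 : ℝ) 1) (hτ : 1 ≤ τ)
    (hτ₀ : 2 / c₀ * (b + |h| + (4 * lam + 1) ^ 2 / 4) ≤ τ) (hc₀ : 0 < c₀) (hF : -(lam * G) ≤ F)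
    (hx : x = 0 ∨ c₀ ≤ X ∧ |Y| ≤ b) :
    τ * G + τ ^ 3 * (c₀ / 2) * x ^ 2 ≤
      S ^ 2 + A ^ 2 + (4 * lam + 1) * τ * x * S + 4 * τ * F + (4 * lam + 1) * τ * G
        + (τ ^ 3 * X - τ ^ 2 * κ * Y + κ ^ 2 * τ * h) * x ^ 2 := by
  have hτpos : 0 < τ := one_pos.trans_le hτ
  have hgrad : τ * G ≤ 4 * τ * F + (4 * lam + 1) * τ * G := by nlinarith
  have hsquare : -((4 * lam + 1) ^ 2 * τ ^ 2 / 4 * x ^ 2) ≤ S ^ 2 + (4 * lam + 1) * τ * x * S := by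
    linarith [sq_nonneg (S + (4 * lam + 1) * τ * x / 2)]
  have hzeroth : (τ ^ 3 * (c₀ / 2) + (4 * lam + 1) ^ 2 * τ ^ 2 / 4) * x ^ 2 ≤
      (τ ^ 3 * X - τ ^ 2 * κ * Y + κ ^ 2 * τ * h) * x ^ 2 := by
    obtain rfl | ⟨hX, hY⟩ := hx
    · simp
    refine mul_le_mul_of_nonneg_right ?_ (sq_nonneg x)
    have hlarge : b + |h| + (4 * lam + 1) ^ 2 / 4 ≤ τ * (c₀ / 2) := by
      rw [div_mul_eq_mul_div, div_le_iff₀ hc₀] at hτ₀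
      linarith
    have hκY : κ * Y ≤ b :=
      (le_abs_self _).trans (by rw [abs_mul, abs_of_nonneg hκ.1]; nlinarith [abs_nonneg Y, hκ.2])
    have hκh : -(τ ^ 2 * |h|) ≤ κ ^ 2 * τ * h := by
      have : κ ^ 2 * τ * |h| ≤ τ ^ 2 * |h| := by
        gcongr
        nlinarith [hκ.1, hκ.2, mul_nonneg hκ.1 (sub_nonneg.2 hκ.2)]
      nlinarith [neg_abs_le h, mul_nonneg (sq_nonneg κ) hτpos.le]
    nlinarith [mul_le_mul_of_nonneg_left hlarge (sq_nonneg τ),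
      mul_le_mul_of_nonneg_left hκY (sq_nonneg τ),
      mul_le_mul_of_nonneg_left hX (pow_nonneg hτpos.le 3)]
  linarith [sq_nonneg A]

lemma integrable_gradSq_add_sq (hu : ContDiff ℝ 2 u) (hc : HasCompactSupport u) (x y : ℝ) :
    Integrable fun p => x * gradSq u p + y * u p ^ 2 := by
  have := continuous_gradSq (hu.of_le one_le_two)
  have := hu.continuous
  refine Continuous.integrable_of_hasCompactSupport (by fun_prop) (.intro hc fun p hp => ?_)
  simp [gradSq_eq_zero_of_notMem_tsupport hp, image_eq_zero_of_notMem_tsupport hp]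

lemma integrable_mul_energy {W : SpaceTime n → ℝ} (hW : Continuous W) (hu : ContDiff ℝ 2 u)
    (hc : HasCompactSupport u) : Integrable fun p => W p * energy u p :=
  (hW.mul (continuous_energy (hu.of_le one_le_two))).integrable_of_hasCompactSupport
    (.intro hc fun p hp => by simp [energy_eq_zero_of_notMem_tsupport hp])

lemma integrable_mul_sq_heatOp {W : SpaceTime n → ℝ} (hW : Continuous W) (hu : ContDiff ℝ 2 u)
    (hc : HasCompactSupport u) : Integrable fun p => W p * heatOp κ u p ^ 2 :=
  (hW.mul ((continuous_heatOp hu).pow 2)).integrable_of_hasCompactSupport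
    (.intro hc fun p hp => by simp [heatOp_eq_zero_of_notMem_tsupport hp])

lemma integral_conjugated_lower_bound (hφ : HasConstHessian φ B)
    (hlam : ∀ u p, -(lam * gradSq u p) ≤ gradForm B u p) (hc₀ : 0 < c₀)
    (hconv : ∀ p ∈ N, c₀ ≤ 4 * gradForm B φ p - (4 * lam + 1) * gradSq φ p)
    (hb : ∀ p ∈ N, |4 * gradTimeForm B φ p - (4 * lam + 1) * ∂ₜ φ p| ≤ b)
    (hκ : κ ∈ Icc (0 : ℝ) 1) (hτ : 1 ≤ τ)
    (hτ₀ : 2 / c₀ * (b + |B timeVec timeVec| + (4 * lam + 1) ^ 2 / 4) ≤ τ)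
    (hu : ContDiff ℝ 2 u) (hc : HasCompactSupport u) (hN : Function.support u ⊆ N) :
    ∫ p, (τ * gradSq u p + τ ^ 3 * (c₀ / 2) * u p ^ 2) ≤
      ∫ p, (symPart κ τ φ u p + antiPart κ τ φ u p) ^ 2 := by
  refine integral_le_integral_of_add_zeroMean_le
    (sq_symPart_add_antiPart_sub_mem_zeroMean (κ := κ) (τ := τ) hφ hu hc (4 * lam + 1))
    (integrable_gradSq_add_sq hu hc _ _) ?_ fun p => ?_
  · refine Continuous.integrable_of_hasCompactSupport ?_ (.intro hc fun p hp => ?_)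
    · have := continuous_lap hu
      have := hu.continuous
      have := (hφ.contDiff_potential (κ := κ) (τ := τ)).continuous
      have := fun v => (contDiff_dirDeriv (k := 1) hu v).continuous
      have := fun v => (hφ.contDiff_dirDeriv_weight v).continuous
      unfold symPart antiPart
      simp only [hφ.dirDeriv_dirDeriv]
      fun_prop
    · simp [symPart, antiPart, lap_eq_zero_of_notMem_tsupport hp,
        dirDeriv_eq_zero_of_notMem_tsupport hp, image_eq_zero_of_notMem_tsupport hp]
  · have hx : u p = 0 ∨ p ∈ N := or_iff_not_imp_left.2 fun h => hN h
    have := carleman_density_lower_bound (S := symPart κ τ φ u p) (A := antiPart κ τ φ u p) hκ hτ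
      hτ₀ hc₀ (hlam u p) (hx.imp_right fun h => ⟨hconv p h, hb p h⟩)
    linarith

/-- A Carleman estimate with weight `e^{τφ}` for functions supported in `N`, uniformly for the
operators `Δ + κ ∂ₜ` with `0 ≤ κ ≤ 1`. -/
def CarlemanEstimateOn (φ : SpaceTime n → ℝ) (N : Set (SpaceTime n)) : Prop :=
  ∃ c > 0, ∃ τ₀ ≥ 1, ∀ τ ≥ τ₀, ∀ κ ∈ Icc (0 : ℝ) 1, ∀ g, ContDiff ℝ 2 g → HasCompactSupport g →
    Function.support g ⊆ N →
      τ * ∫ p, Real.exp (τ * φ p) ^ 2 * energy g p ≤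
        c * ∫ p, Real.exp (τ * φ p) ^ 2 * heatOp κ g p ^ 2

lemma exp_sq_mul_energy_le {g : SpaceTime n → ℝ} {p : SpaceTime n}
    (hφ : DifferentiableAt ℝ φ p) (hg : DifferentiableAt ℝ g p) :
    Real.exp (τ * φ p) ^ 2 * energy g p ≤
      2 * gradSq (fun x => Real.exp (τ * φ x) * g x) p
        + (1 + 2 * τ ^ 2 * gradSq φ p) * (Real.exp (τ * φ p) * g p) ^ 2 := by
  have hgrad : Real.exp (τ * φ p) ^ 2 * gradSq g p ≤
      2 * gradSq (fun x => Real.exp (τ * φ x) * g x) p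
        + 2 * τ ^ 2 * gradSq φ p * (Real.exp (τ * φ p) * g p) ^ 2 := by
    simp only [gradSq, Finset.mul_sum, Finset.sum_mul, ← Finset.sum_add_distrib]
    refine Finset.sum_le_sum fun i _ => ?_
    rw [dirDeriv_exp_mul hφ hg]
    linarith [sq_nonneg (Real.exp (τ * φ p) * (2 * τ * ∂ₓ[i] φ p * g p + ∂ₓ[i] g p))]
  rw [energy]
  linarith

lemma mul_exp_sq_mul_energy_le {g : SpaceTime n → ℝ} {p : SpaceTime n}
    (hφ : DifferentiableAt ℝ φ p) (hg : DifferentiableAt ℝ g p) (hτ : 1 ≤ τ) (hc₀ : 0 < c₀)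
    (hp : g p = 0 ∨ gradSq φ p ≤ d) :
    τ * (Real.exp (τ * φ p) ^ 2 * energy g p) ≤ (2 + (1 + 2 * |d|) * (2 / c₀)) *
      (τ * gradSq (fun x => Real.exp (τ * φ x) * g x) p
        + τ ^ 3 * (c₀ / 2) * (Real.exp (τ * φ p) * g p) ^ 2) := by
  have hτpos : 0 < τ := one_pos.trans_le hτ
  set c := 2 + (1 + 2 * |d|) * (2 / c₀)
  set u := fun x => Real.exp (τ * φ x) * g x
  have hle : _ ≤ 2 * gradSq u p + _ * u p ^ 2 := exp_sq_mul_energy_le (τ := τ) hφ hg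
  have hzeroth : (τ + 2 * τ ^ 3 * gradSq φ p) * u p ^ 2 ≤ τ ^ 3 * (c * (c₀ / 2)) * u p ^ 2 := by
    obtain hg | hd := hp
    · simp [u, hg]
    have hτ₃ : τ ≤ τ ^ 3 := le_self_pow₀ hτ three_ne_zero
    have hτd := mul_le_mul_of_nonneg_left (hd.trans (le_abs_self d)) (pow_nonneg hτpos.le 3)
    have hc₂ : c * (c₀ / 2) = c₀ + (1 + 2 * |d|) := by simp only [c]; field_simp
    refine mul_le_mul_of_nonneg_right ?_ (sq_nonneg _)
    rw [hc₂]
    nlinarith [mul_pos hc₀ (pow_pos hτpos 3)]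
  have hfirst : τ * (2 * gradSq u p) ≤ c * (τ * gradSq u p) := by
    have : 2 ≤ c := le_add_of_nonneg_right (by positivity)
    nlinarith [mul_nonneg hτpos.le (gradSq_nonneg (u := u) (p := p))]
  linarith [mul_le_mul_of_nonneg_left hle hτpos.le]

theorem HasConstHessian.carlemanEstimateOn (hφ : HasConstHessian φ B)
    (hlam : ∀ u p, -(lam * gradSq u p) ≤ gradForm B u p) (hc₀ : 0 < c₀)
    (hconv : ∀ p ∈ N, c₀ ≤ 4 * gradForm B φ p - (4 * lam + 1) * gradSq φ p)
    (hb : ∀ p ∈ N, |4 * gradTimeForm B φ p - (4 * lam + 1) * ∂ₜ φ p| ≤ b)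
    (hgrad : ∀ p ∈ N, gradSq φ p ≤ d) : CarlemanEstimateOn φ N := by
  set c := 2 + (1 + 2 * |d|) * (2 / c₀)
  set τ₁ := 2 / c₀ * (b + |B timeVec timeVec| + (4 * lam + 1) ^ 2 / 4)
  refine ⟨c, by positivity, max 1 τ₁, le_max_left 1 _, fun τ hτ κ hκ g hg hc hN => ?_⟩
  obtain ⟨hτ₁, hτ₀⟩ := max_le_iff.1 hτ
  set u := fun p => Real.exp (τ * φ p) * g p
  have hu : ContDiff ℝ 2 u := (contDiff_const.mul hφ.contDiff).exp.mul hg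
  have hcu : HasCompactSupport u := hc.mul_left
  have hNu : Function.support u ⊆ N := (Function.support_mul_subset_right _ _).trans hN
  have hweight : Continuous fun p => Real.exp (τ * φ p) ^ 2 := by
    have := hφ.contDiff.continuous
    fun_prop
  calc τ * ∫ p, Real.exp (τ * φ p) ^ 2 * energy g p
      = ∫ p, τ * (Real.exp (τ * φ p) ^ 2 * energy g p) := (integral_const_mul _ _).symm
    _ ≤ ∫ p, c * (τ * gradSq u p + τ ^ 3 * (c₀ / 2) * u p ^ 2) :=
      integral_mono ((integrable_mul_energy hweight hg hc).const_mul τ)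
        ((integrable_gradSq_add_sq hu hcu _ _).const_mul c) fun p =>
        mul_exp_sq_mul_energy_le (hφ.contDiff.differentiable two_ne_zero p)
          (hg.differentiable two_ne_zero p) hτ₁ hc₀
          (or_iff_not_imp_left.2 fun hp => hgrad p (hN hp))
    _ = c * ∫ p, (τ * gradSq u p + τ ^ 3 * (c₀ / 2) * u p ^ 2) := integral_const_mul _ _
    _ ≤ c * ∫ p, (symPart κ τ φ u p + antiPart κ τ φ u p) ^ 2 :=
      mul_le_mul_of_nonneg_left (integral_conjugated_lower_bound hφ hlam hc₀ hconv hb hκ hτ₁ hτ₀ hu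
        hcu hNu) (by positivity)
    _ = c * ∫ p, Real.exp (τ * φ p) ^ 2 * heatOp κ g p ^ 2 := by
      simp only [u, symPart_add_antiPart_exp_mul hφ.contDiff hg, mul_pow]

/-- Strict pseudoconvexity at a point persists nearby by continuity. -/
theorem HasConstHessian.exists_carlemanEstimateOn {y₀ : SpaceTime n} (hφ : HasConstHessian φ B)
    (hlam : ∀ u p, -(lam * gradSq u p) ≤ gradForm B u p)
    (hconv : (4 * lam + 1) * gradSq φ y₀ < 4 * gradForm B φ y₀) :
    ∃ N ∈ 𝓝 y₀, CarlemanEstimateOn φ N := by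
  have hD := fun v => (hφ.contDiff_dirDeriv_weight v).continuous
  have hgrad : Continuous (gradSq φ) := continuous_gradSq (hφ.contDiff.of_le one_le_two)
  set X := fun p => 4 * gradForm B φ p - (4 * lam + 1) * gradSq φ p
  set Y := fun p => |4 * gradTimeForm B φ p - (4 * lam + 1) * ∂ₜ φ p|
  have hX : Continuous X := by unfold X gradForm; fun_prop
  have hY : Continuous Y := by unfold Y gradTimeForm; fun_prop
  have hX₀ : 0 < X y₀ := sub_pos.2 hconv
  exact ⟨_, inter_mem (hX.continuousAt.eventually_const_le (half_lt_self hX₀)) (inter_mem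
      (hY.continuousAt.eventually_le_const (lt_add_one _))
      (hgrad.continuousAt.eventually_le_const (lt_add_one _))),
    hφ.carlemanEstimateOn hlam (half_pos hX₀) (fun _ hp => hp.1) (fun _ hp => hp.2.1)
      fun _ hp => hp.2.2⟩

end CarlemanInequality

section Taylor

variable {E : Type*} [NormedAddCommGroup E] [NormedSpace ℝ E]

lemma exists_norm_sub_sub_fderiv_le_sq {f : E → ℝ} {y₀ : E} (hf : ContDiffAt ℝ 2 f y₀) :
    ∃ C ≥ 0, ∀ᶠ p in 𝓝 y₀, |f p - f y₀ - fderiv ℝ f y₀ (p - y₀)| ≤ C * ‖p - y₀‖ ^ 2 := by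
  obtain ⟨C, t, ht, hC⟩ :=
    (hf.fderiv_right (m := 1) (by norm_num)).exists_lipschitzOnWith
  have hdiff : ∀ᶠ p in 𝓝 y₀, DifferentiableAt ℝ f p :=
    (hf.eventually (by simp)).mono fun p hp => hp.differentiableAt two_ne_zero
  obtain ⟨δ, hδ, hball⟩ := Metric.mem_nhds_iff.1 (inter_mem ht hdiff)
  refine ⟨C, C.2, ?_⟩
  filter_upwards [Metric.ball_mem_nhds y₀ hδ] with p hp
  have hsub : Metric.closedBall y₀ (dist p y₀) ⊆ t ∩ {p | DifferentiableAt ℝ f p} :=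
    (Metric.closedBall_subset_ball hp).trans hball
  have hmean := (convex_closedBall y₀ (dist p y₀)).norm_image_sub_le_of_norm_fderiv_le'
    (𝕜 := ℝ) (f := f) (φ := fderiv ℝ f y₀) (C := C * ‖p - y₀‖) (x := y₀) (y := p)
    (fun x hx => (hsub hx).2)
    (fun x hx => (hC.norm_sub_le (hsub hx).1 (mem_of_mem_nhds ht)).trans
      (by gcongr; simpa only [dist_eq_norm] using Metric.mem_closedBall.1 hx))
    (Metric.mem_closedBall_self dist_nonneg) (Metric.mem_closedBall.2 le_rfl)
  simpa only [Real.norm_eq_abs, sq, mul_assoc] using hmean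

end Taylor

section Weight

variable {n : ℕ}

/-- The bilinear form of the Hessian of `carlemanWeight`: a large positive multiple of `l ⊗ l`,
corrected by a multiple of the Euclidean inner product of space-time. -/
def weightHessian (l : SpaceTime n →L[ℝ] ℝ) (K C : ℝ) (v w : SpaceTime n) : ℝ :=
  K * l v * l w - 2 * C * (v.1 * w.1 + inner ℝ v.2 w.2)

/-- The quadratic polynomial with value `0`, differential `-l` and Hessian `weightHessian l K C` at
`y₀`. For `l = dσ(y₀)` it convexifies `-σ`, while being strictly negative on `{0 ≤ σ}` away
from `y₀`. -/
def carlemanWeight (l : SpaceTime n →L[ℝ] ℝ) (K C : ℝ) (y₀ p : SpaceTime n) : ℝ :=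
  -l (p - y₀) + weightHessian l K C (p - y₀) (p - y₀) / 2

variable {l : SpaceTime n →L[ℝ] ℝ} {K C : ℝ} {y₀ : SpaceTime n}

lemma dirDeriv_carlemanWeight (w p : SpaceTime n) :
    dirDeriv w (carlemanWeight l K C y₀) p = -l w + weightHessian l K C (p - y₀) w := by
  have hz := (hasFDerivAt_id (𝕜 := ℝ) p).sub_const y₀
  have hl := l.hasFDerivAt.comp p hz
  have h₁ := (ContinuousLinearMap.fst ℝ ℝ (EuclideanSpace ℝ (Fin n))).hasFDerivAt.comp p hz
  have h₂ := (ContinuousLinearMap.snd ℝ ℝ (EuclideanSpace ℝ (Fin n))).hasFDerivAt.comp p hz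
  have h := hl.neg.add ((((hl.const_mul K).mul hl).sub
    (((h₁.mul h₁).add (h₂.inner ℝ h₂)).const_mul (2 * C))).mul_const (1 / 2))
  have h' : HasFDerivAt (carlemanWeight l K C y₀) _ p :=
    h.congr_of_eventuallyEq (.of_forall fun p => by
      simp [carlemanWeight, weightHessian, div_eq_mul_inv])
  rw [dirDeriv, h'.fderiv]
  simp [weightHessian, real_inner_comm w.2]
  ring

lemma hasConstHessian_carlemanWeight :
    HasConstHessian (carlemanWeight l K C y₀) (weightHessian l K C) where
  contDiff := by
    have hsnd : ContDiff ℝ 2 fun p : SpaceTime n => (p - y₀).2 := by fun_prop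
    have hinner := hsnd.inner ℝ hsnd
    unfold carlemanWeight weightHessian
    fun_prop
  dirDeriv_dirDeriv v w p := by
    let L : SpaceTime n →L[ℝ] ℝ := (K * l w) • l - (2 * C) •
      (w.1 • .fst ℝ ℝ _ + (innerSL ℝ w.2).comp (.snd ℝ ℝ _))
    have hL (z : SpaceTime n) : weightHessian l K C z w = L z := by
      simp [weightHessian, L, real_inner_comm w.2]
      ring
    have haffine : dirDeriv w (carlemanWeight l K C y₀) = fun p => -l w + L (p - y₀) :=
      funext fun p => by rw [dirDeriv_carlemanWeight, hL]
    have hderiv : HasFDerivAt (fun p => -l w + L (p - y₀)) L p :=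
      (L.hasFDerivAt.comp p ((hasFDerivAt_id p).sub_const y₀)).const_add _
    rw [haffine, dirDeriv, hderiv.fderiv, hL]

lemma weightHessian_spaceVec (i j : Fin n) :
    weightHessian l K C (spaceVec i) (spaceVec j) =
      K * l (spaceVec i) * l (spaceVec j) - if i = j then 2 * C else 0 := by
  simp [weightHessian, spaceVec, EuclideanSpace.inner_single_left]

lemma gradForm_weightHessian (u : SpaceTime n → ℝ) (p : SpaceTime n) :
    gradForm (weightHessian l K C) u p =
      K * (∑ i, l (spaceVec i) * ∂ₓ[i] u p) ^ 2 - 2 * C * gradSq u p := by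
  simp only [gradForm, weightHessian_spaceVec, sub_mul, ite_mul, zero_mul,
    Finset.sum_sub_distrib, Finset.sum_ite_eq, Finset.mem_univ, if_true]
  congr 1
  · rw [sq, Finset.sum_mul_sum, Finset.mul_sum]
    simp only [Finset.mul_sum]
    exact Finset.sum_congr rfl fun i _ => Finset.sum_congr rfl fun j _ => by ring
  · rw [gradSq, Finset.mul_sum]
    exact Finset.sum_congr rfl fun i _ => by ring

lemma exists_carlemanEstimateOn_carlemanWeight (hK : 0 ≤ K)
    (hl : 0 < ∑ i, l (spaceVec i) ^ 2) (hconv : 16 * C + 1 < 4 * K * ∑ i, l (spaceVec i) ^ 2) :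
    ∃ N ∈ 𝓝 y₀, CarlemanEstimateOn (carlemanWeight l K C y₀) N := by
  have hderiv (i : Fin n) : ∂ₓ[i] (carlemanWeight l K C y₀) y₀ = -l (spaceVec i) := by
    simp [dirDeriv_carlemanWeight, weightHessian]
  have hgrad : gradSq (carlemanWeight l K C y₀) y₀ = ∑ i, l (spaceVec i) ^ 2 := by
    simp only [gradSq, hderiv, neg_sq]
  refine hasConstHessian_carlemanWeight.exists_carlemanEstimateOn (lam := 2 * C)
    (fun u p => ?_) ?_
  · rw [gradForm_weightHessian]
    linarith [mul_nonneg hK (sq_nonneg (∑ i, l (spaceVec i) * ∂ₓ[i] u p))]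
  · simp only [gradForm_weightHessian, hgrad, hderiv, mul_neg, Finset.sum_neg_distrib, neg_sq,
      ← sq]
    linarith [mul_lt_mul_of_pos_right hconv hl]

lemma sq_norm_le_sq_add_inner (z : SpaceTime n) : ‖z‖ ^ 2 ≤ z.1 * z.1 + inner ℝ z.2 z.2 := by
  rw [real_inner_self_eq_norm_sq, ← sq, ← sq_abs z.1, ← Real.norm_eq_abs]
  rcases max_choice ‖z.1‖ ‖z.2‖ with h | h <;>
    rw [Prod.norm_def, h] <;> nlinarith [sq_nonneg ‖z.1‖, sq_nonneg ‖z.2‖]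

lemma eventually_carlemanWeight_le {σ : SpaceTime n → ℝ} {A : ℝ} (hA : 0 ≤ A)
    (htaylor : ∀ᶠ p in 𝓝 y₀, σ p - l (p - y₀) ≤ A * ‖p - y₀‖ ^ 2) :
    ∀ᶠ p in 𝓝 y₀, 0 ≤ σ p → carlemanWeight l K (2 * A + 1) y₀ p ≤ -‖p - y₀‖ ^ 2 := by
  have hsmall : ∀ᶠ p in 𝓝 y₀, |K * l (p - y₀)| < 1 := by
    have hcont : Continuous fun p => |K * l (p - y₀)| := by fun_prop
    exact hcont.continuousAt.eventually_lt_const (by simp)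
  filter_upwards [htaylor, hsmall] with p htaylor hsmall hσ
  have hs := abs_lt.1 hsmall
  have hnorm := sq_norm_le_sq_add_inner (p - y₀)
  set s := l (p - y₀)
  have hlin : -s ≤ A * ‖p - y₀‖ ^ 2 := by linarith
  have hconvex : -s * (1 - K * s / 2) ≤ 2 * (A * ‖p - y₀‖ ^ 2) := by
    rcases le_total 0 s with hs₀ | hs₀
    · nlinarith [mul_nonneg hs₀ (show 0 ≤ 1 - K * s / 2 by linarith),
        mul_nonneg hA (sq_nonneg ‖p - y₀‖)]
    · nlinarith [mul_nonneg (neg_nonneg.2 hs₀) (show 0 ≤ 1 + K * s / 2 by linarith), hlin]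
  have hconcave := mul_le_mul_of_nonneg_left hnorm (show 0 ≤ 2 * A + 1 by linarith)
  simp only [carlemanWeight, weightHessian]
  linarith

lemma exists_carlemanWeight {σ : SpaceTime n → ℝ} (hσ : ContDiffAt ℝ 2 σ y₀) (hσ₀ : σ y₀ = 0)
    (hgrad : ∃ i, ∂ₓ[i] σ y₀ ≠ 0) :
    ∃ φ : SpaceTime n → ℝ, Continuous φ ∧ φ y₀ = 0 ∧
      (∀ᶠ p in 𝓝 y₀, 0 ≤ σ p → φ p ≤ -‖p - y₀‖ ^ 2) ∧ ∃ N ∈ 𝓝 y₀, CarlemanEstimateOn φ N := by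
  obtain ⟨A, hA, htaylor⟩ := exists_norm_sub_sub_fderiv_le_sq hσ
  obtain ⟨i, hi⟩ := hgrad
  set l := fderiv ℝ σ y₀
  have hpos : 0 < ∑ j, l (spaceVec j) ^ 2 :=
    Finset.sum_pos' (fun _ _ => sq_nonneg _) ⟨i, Finset.mem_univ i, by positivity⟩
  obtain ⟨K, hK, hconv⟩ : ∃ K ≥ 0, 16 * (2 * A + 1) + 1 < 4 * K * ∑ j, l (spaceVec j) ^ 2 :=
    ⟨(8 * A + 5) / ∑ j, l (spaceVec j) ^ 2, by positivity, by field_simp; linarith⟩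
  refine ⟨carlemanWeight l K (2 * A + 1) y₀,
    hasConstHessian_carlemanWeight.contDiff.continuous, by simp [carlemanWeight, weightHessian],
    eventually_carlemanWeight_le hA (htaylor.mono fun p hp => ?_),
    exists_carlemanEstimateOn_carlemanWeight hK hpos hconv⟩
  simpa only [hσ₀, sub_zero] using (le_abs_self _).trans hp

end Weight

section UniqueContinuation

section Concentration

variable {X : Type*} [TopologicalSpace X] [MeasurableSpace X] [OpensMeasurableSpace X]
  {μ : Measure X} [μ.IsOpenPosMeasure] [IsFiniteMeasureOnCompacts μ] {φ F : X → ℝ} {η M τ₁ : ℝ}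

lemma eq_zero_of_mul_integral_exp_sq_mul_le (hφ : Continuous φ) (hF : Continuous F)
    (hF₀ : 0 ≤ F) (hFc : HasCompactSupport F)
    (h : ∀ τ ≥ τ₁, τ * ∫ p, Real.exp (τ * φ p) ^ 2 * F p ∂μ ≤ M * Real.exp (τ * -η) ^ 2)
    {p : X} (hp : -η < φ p) : F p = 0 := by
  have hV : IsOpen {p | -η < φ p} := isOpen_lt continuous_const hφ
  have hFint : Integrable F μ := hF.integrable_of_hasCompactSupport hFc
  have hWint (τ : ℝ) : Integrable (fun p => Real.exp (τ * φ p) ^ 2 * F p) μ :=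
    Continuous.integrable_of_hasCompactSupport (by fun_prop) hFc.mul_left
  have hbound : ∀ τ ≥ max τ₁ 1, ∫ p in {p | -η < φ p}, F p ∂μ ≤ M / τ := by
    intro τ hτ
    have hτ₀ : 0 < τ := one_pos.trans_le ((le_max_right _ _).trans hτ)
    have hexp : Real.exp (τ * -η) ^ 2 * ∫ p in {p | -η < φ p}, F p ∂μ
        ≤ ∫ p, Real.exp (τ * φ p) ^ 2 * F p ∂μ := by
      rw [← integral_const_mul]
      refine (setIntegral_mono_on (hFint.const_mul _).integrableOn (hWint τ).integrableOn
        hV.measurableSet fun p hp => ?_).trans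
        (setIntegral_le_integral (hWint τ) (.of_forall fun p => mul_nonneg (sq_nonneg _) (hF₀ p)))
      exact mul_le_mul_of_nonneg_right (by gcongr; exact hp.le) (hF₀ p)
    rw [le_div_iff₀ hτ₀]
    refine le_of_mul_le_mul_left ?_ (show 0 < Real.exp (τ * -η) ^ 2 by positivity)
    linarith [h τ ((le_max_left _ _).trans hτ), mul_le_mul_of_nonneg_left hexp hτ₀.le]
  have hzero : ∫ p in {p | -η < φ p}, F p ∂μ = 0 :=
    le_antisymm (ge_of_tendsto (tendsto_const_nhds.div_atTop tendsto_id)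
      ((eventually_ge_atTop _).mono hbound)) (integral_nonneg hF₀)
  exact Measure.eqOn_open_of_ae_eq
    ((integral_eq_zero_iff_of_nonneg hF₀ hFint.integrableOn).1 hzero) hV hF.continuousOn
    continuousOn_const hp

end Concentration

variable {n : ℕ} {ι : Type*} [Fintype ι] {φ : SpaceTime n → ℝ} {N : Set (SpaceTime n)}
  {g : ι → SpaceTime n → ℝ} {κ : ι → ℝ} {C η : ℝ}

lemma integral_exp_sq_mul_sq_heatOp_le (hφ : Continuous φ) (hg : ∀ k, ContDiff ℝ 2 (g k))
    (hc : ∀ k, HasCompactSupport (g k)) (hC : 0 ≤ C)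
    (hdom : ∀ p, -η < φ p → ∀ k, heatOp (κ k) (g k) p ^ 2 ≤ C * ∑ l, energy (g l) p)
    {τ : ℝ} (hτ : 0 ≤ τ) (k : ι) :
    ∫ p, Real.exp (τ * φ p) ^ 2 * heatOp (κ k) (g k) p ^ 2 ≤
      C * (∑ l, ∫ p, Real.exp (τ * φ p) ^ 2 * energy (g l) p)
        + Real.exp (τ * -η) ^ 2 * ∫ p, heatOp (κ k) (g k) p ^ 2 := by
  have hexp : Continuous fun p => Real.exp (τ * φ p) ^ 2 := by fun_prop
  have henergy (l : ι) := integrable_mul_energy hexp (hg l) (hc l)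
  have hsum := (integrable_finsetSum Finset.univ fun l _ => henergy l).const_mul C
  have hheat := integrable_mul_sq_heatOp (κ := κ k)
    (continuous_const (y := Real.exp (τ * -η) ^ 2)) (hg k) (hc k)
  rw [← integral_finsetSum _ fun l _ => henergy l, ← integral_const_mul, ← integral_const_mul,
    ← integral_add hsum hheat]
  refine integral_mono (integrable_mul_sq_heatOp hexp (hg k) (hc k)) (hsum.add hheat)
    fun p => ?_
  rw [← Finset.mul_sum]
  have hE : 0 ≤ ∑ l, energy (g l) p := Finset.sum_nonneg fun l _ => energy_nonneg
  rcases lt_or_ge (-η) (φ p) with hp | hp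
  · linarith [mul_le_mul_of_nonneg_left (hdom p hp k) (sq_nonneg (Real.exp (τ * φ p))),
      mul_nonneg (sq_nonneg (Real.exp (τ * -η))) (sq_nonneg (heatOp (κ k) (g k) p))]
  · have hle : Real.exp (τ * φ p) ^ 2 ≤ Real.exp (τ * -η) ^ 2 := by gcongr
    linarith [mul_le_mul_of_nonneg_right hle (sq_nonneg (heatOp (κ k) (g k) p)),
      mul_nonneg hC (mul_nonneg (sq_nonneg (Real.exp (τ * φ p))) hE)]

lemma CarlemanEstimateOn.exists_mul_sum_integral_le (hest : CarlemanEstimateOn φ N)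
    (hφ : Continuous φ) (hκ : ∀ k, κ k ∈ Icc (0 : ℝ) 1) (hg : ∀ k, ContDiff ℝ 2 (g k))
    (hc : ∀ k, HasCompactSupport (g k)) (hN : ∀ k, Function.support (g k) ⊆ N) (hC : 0 ≤ C)
    (hdom : ∀ p, -η < φ p → ∀ k, heatOp (κ k) (g k) p ^ 2 ≤ C * ∑ l, energy (g l) p) :
    ∃ M τ₁ : ℝ, ∀ τ ≥ τ₁, τ * ∑ k, ∫ p, Real.exp (τ * φ p) ^ 2 * energy (g k) p ≤
      M * Real.exp (τ * -η) ^ 2 := by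
  obtain ⟨c, hc₀, τ₀, hτ₀, hest⟩ := hest
  refine ⟨2 * (c * ∑ k, ∫ p, heatOp (κ k) (g k) p ^ 2),
    max τ₀ (2 * (Fintype.card ι * (c * C))), fun τ hτ => ?_⟩
  have hτ₁ : τ₀ ≤ τ := (le_max_left _ _).trans hτ
  have hτ₂ : 0 ≤ τ := zero_le_one.trans (hτ₀.trans hτ₁)
  set I := ∑ k, ∫ p, Real.exp (τ * φ p) ^ 2 * energy (g k) p
  have hI : 0 ≤ I := Finset.sum_nonneg fun k _ =>
    integral_nonneg fun p => mul_nonneg (sq_nonneg _) energy_nonneg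
  have hcomponent (k : ι) : τ * ∫ p, Real.exp (τ * φ p) ^ 2 * energy (g k) p ≤
      c * (C * I + Real.exp (τ * -η) ^ 2 * ∫ p, heatOp (κ k) (g k) p ^ 2) :=
    (hest τ hτ₁ (κ k) (hκ k) (g k) (hg k) (hc k) (hN k)).trans
      (mul_le_mul_of_nonneg_left
        (integral_exp_sq_mul_sq_heatOp_le hφ hg hc hC hdom hτ₂ k) hc₀.le)
  have htotal : τ * I ≤ Fintype.card ι * (c * C) * I
      + Real.exp (τ * -η) ^ 2 * (c * ∑ k, ∫ p, heatOp (κ k) (g k) p ^ 2) := by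
    calc τ * I
        ≤ ∑ k, c * (C * I + Real.exp (τ * -η) ^ 2 * ∫ p, heatOp (κ k) (g k) p ^ 2) := by
          rw [Finset.mul_sum]
          exact Finset.sum_le_sum fun k _ => hcomponent k
      _ = _ := by
          rw [← Finset.mul_sum, Finset.sum_add_distrib, Finset.sum_const, nsmul_eq_mul,
            Finset.card_univ, ← Finset.mul_sum]
          ring
  -- For `τ` large the first term on the right is at most half of the left-hand side.
  linarith [mul_le_mul_of_nonneg_right ((le_max_right τ₀ _).trans hτ) hI]

lemma CarlemanEstimateOn.eq_zero (hest : CarlemanEstimateOn φ N)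
    (hφ : Continuous φ) (hκ : ∀ k, κ k ∈ Icc (0 : ℝ) 1) (hg : ∀ k, ContDiff ℝ 2 (g k))
    (hc : ∀ k, HasCompactSupport (g k)) (hN : ∀ k, Function.support (g k) ⊆ N) (hC : 0 ≤ C)
    (hdom : ∀ p, -η < φ p → ∀ k, heatOp (κ k) (g k) p ^ 2 ≤ C * ∑ l, energy (g l) p)
    {p : SpaceTime n} (hp : -η < φ p) (k : ι) : g k p = 0 := by
  obtain ⟨M, τ₁, hM⟩ := hest.exists_mul_sum_integral_le hφ hκ hg hc hN hC hdom
  have henergy : energy (g k) p = 0 := by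
    refine eq_zero_of_mul_integral_exp_sq_mul_le (μ := volume) (τ₁ := max τ₁ 0) (M := M) hφ
      (continuous_energy ((hg k).of_le one_le_two)) (fun _ => energy_nonneg)
      (.intro (hc k) fun _ => energy_eq_zero_of_notMem_tsupport) (fun τ hτ => ?_) hp
    refine (mul_le_mul_of_nonneg_left ?_ ((le_max_right _ _).trans hτ)).trans
      (hM τ ((le_max_left _ _).trans hτ))
    exact Finset.single_le_sum
      (f := fun k => ∫ p, Real.exp (τ * φ p) ^ 2 * energy (g k) p)
      (fun k _ => integral_nonneg fun p => mul_nonneg (sq_nonneg _) energy_nonneg)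
      (Finset.mem_univ k)
  exact pow_eq_zero_iff two_ne_zero |>.1 (le_antisymm (henergy ▸ sq_le_energy) (sq_nonneg _))

lemma contDiff_bump_mul {E : Type*} [NormedAddCommGroup E] [NormedSpace ℝ E] [HasContDiffBump E]
    {y₀ : E} (χ : ContDiffBump y₀) {f : E → ℝ} {k : ℕ∞} {W : Set E}
    (hW : ∀ p ∈ Metric.closedBall y₀ χ.rOut, W ∈ 𝓝 p) (hf : ContDiffOn ℝ k f W) :
    ContDiff ℝ k fun p => χ p * f p := by
  refine contMDiff_iff_contDiff.1 (contMDiff_of_tsupport fun p hp => ?_)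
  rw [contMDiffAt_iff_contDiffAt]
  exact χ.contDiffAt.mul
    (hf.contDiffAt (hW p (χ.tsupport_eq ▸ closure_mono (Function.support_mul_subset_left _ _) hp)))

lemma sq_heatOp_bump_mul_le {f : ι → SpaceTime n → ℝ} {y₀ p : SpaceTime n}
    (χ : ContDiffBump y₀) (hC : 0 ≤ C)
    (hin : p ∈ Metric.ball y₀ χ.rIn → ∀ k, heatOp (κ k) (f k) p ^ 2 ≤ C * ∑ l, energy (f l) p)
    (hout : p ∈ Metric.closedBall y₀ χ.rOut → p ∉ Metric.ball y₀ χ.rIn →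
      ∀ k, f k =ᶠ[𝓝 p] 0) (k : ι) :
    heatOp (κ k) (fun x => χ x * f k x) p ^ 2 ≤ C * ∑ l, energy (fun x => χ x * f l x) p := by
  by_cases hp : p ∈ Metric.ball y₀ χ.rIn
  · have hχ (k : ι) : (fun x => χ x * f k x) =ᶠ[𝓝 p] f k := by
      filter_upwards [χ.eventuallyEq_one_of_mem_ball hp] with x hx
      simp only [hx, Pi.one_apply, one_mul]
    simpa only [(heatOp_congr (hχ k) _).eq_of_nhds, (energy_congr (hχ _)).eq_of_nhds]
      using hin hp k
  · have hsupp : p ∉ tsupport fun x => χ x * f k x := by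
      intro hmem
      have hχ : p ∈ tsupport χ := closure_mono (Function.support_mul_subset_left _ _) hmem
      have hf : p ∈ tsupport (f k) := closure_mono (Function.support_mul_subset_right _ _) hmem
      exact notMem_tsupport_iff_eventuallyEq.2 (hout (χ.tsupport_eq ▸ hχ) hp k) hf
    rw [heatOp_eq_zero_of_notMem_tsupport hsupp, zero_pow two_ne_zero]
    exact mul_nonneg hC (Finset.sum_nonneg fun l _ => energy_nonneg)

theorem exists_nhds_forall_eq_zero {σ : SpaceTime n → ℝ} {y₀ : SpaceTime n}
    (hσ : ContDiffAt ℝ 2 σ y₀) (hσ₀ : σ y₀ = 0) (hgrad : ∃ i, ∂ₓ[i] σ y₀ ≠ 0)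
    (hκ : ∀ k, κ k ∈ Icc (0 : ℝ) 1) (hC : 0 ≤ C) {W : Set (SpaceTime n)} (hW : W ∈ 𝓝 y₀) :
    ∃ V ∈ 𝓝 y₀, ∀ f : ι → SpaceTime n → ℝ, (∀ k, ContDiffOn ℝ 2 (f k) W) →
      (∀ p ∈ W, ∀ k, heatOp (κ k) (f k) p ^ 2 ≤ C * ∑ l, energy (f l) p) →
      (∀ p ∈ W, σ p < 0 → ∀ k, f k p = 0) → ∀ p ∈ V, ∀ k, f k p = 0 := by
  obtain ⟨φ, hφ, hφ₀, hφσ, N, hN, hest⟩ := exists_carlemanWeight hσ hσ₀ hgrad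
  have hσcont : ∀ᶠ p in 𝓝 y₀, ContinuousAt σ p :=
    (hσ.eventually (by simp)).mono fun p hp => hp.continuousAt
  obtain ⟨r, hr, hball⟩ := Metric.eventually_nhds_iff_ball.1
    (hσcont.and (hφσ.and ((eventually_mem_nhds_iff.2 hW).and hN)))
  let χ : ContDiffBump y₀ := ⟨r / 3, 2 * r / 3, by positivity, by linarith⟩
  have hsub : Metric.closedBall y₀ χ.rOut ⊆ Metric.ball y₀ r :=
    Metric.closedBall_subset_ball (by dsimp only [χ]; linarith)
  have hin : Metric.ball y₀ χ.rIn ⊆ Metric.closedBall y₀ χ.rOut :=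
    (Metric.ball_subset_ball χ.rIn_lt_rOut.le).trans Metric.ball_subset_closedBall
  refine ⟨{p | -χ.rIn ^ 2 < φ p} ∩ Metric.ball y₀ χ.rIn, inter_mem ?_
    (Metric.ball_mem_nhds y₀ χ.rIn_pos), fun f hf hdom hvan p hp k => ?_⟩
  · exact (isOpen_lt continuous_const hφ).mem_nhds (by simpa [hφ₀] using pow_pos χ.rIn_pos 2)
  have hgdom : ∀ p, -χ.rIn ^ 2 < φ p → ∀ k,
      heatOp (κ k) (fun x => χ x * f k x) p ^ 2 ≤ C * ∑ l, energy (fun x => χ x * f l x) p := by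
    refine fun p hφp => sq_heatOp_bump_mul_le χ hC
      (fun hp => hdom p (mem_of_mem_nhds (hball p (hsub (hin hp))).2.2.1)) fun hp hp' k => ?_
    obtain ⟨hcont, hle, hWp, -⟩ := hball p (hsub hp)
    have hfar : χ.rIn ^ 2 ≤ ‖p - y₀‖ ^ 2 := by
      rw [Metric.mem_ball, not_lt, dist_eq_norm] at hp'
      exact pow_le_pow_left₀ χ.rIn_pos.le hp' 2
    have hσp : σ p < 0 := not_le.1 fun h => by linarith [hle h]
    filter_upwards [hcont.eventually_lt_const hσp, hWp] with x hx hxW using hvan x hxW hx k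
  have hχ : χ p = 1 := χ.one_of_mem_closedBall (Metric.ball_subset_closedBall hp.2)
  rw [← one_mul (f k p), ← hχ]
  exact hest.eq_zero hφ hκ
    (fun k => contDiff_bump_mul (k := 2) χ (fun p hp => (hball p (hsub hp)).2.2.1) (hf k))
    (fun k => χ.hasCompactSupport.mul_right)
    (fun k => (Function.support_mul_subset_left _ _).trans fun p hp =>
      (hball p (hsub (Metric.ball_subset_closedBall (χ.support_eq ▸ hp)))).2.2.2) hC hgdom hp.1 k

end UniqueContinuation

section VectorCalculus

variable {n : ℕ} {κ A c : ℝ} {f g u ψ : SpaceTime n → ℝ} {p v : SpaceTime n}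
  {R : Matrix (Fin n) (Fin n) ℝ}

lemma dirDeriv_sum_const_mul {ι : Type*} {s : Finset ι} (c : ι → ℝ) {F : ι → SpaceTime n → ℝ}
    (hF : ∀ j ∈ s, DifferentiableAt ℝ (F j) p) :
    dirDeriv v (fun x => ∑ j ∈ s, c j * F j x) p = ∑ j ∈ s, c j * dirDeriv v (F j) p := by
  rw [dirDeriv_sum fun j hj => (hF j hj).const_mul (c j)]
  refine Finset.sum_congr rfl fun j hj => ?_
  rw [dirDeriv_mul (differentiableAt_const _) (hF j hj), dirDeriv_const, mul_zero, add_zero]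

lemma lap_sum_const_mul {ι : Type*} {s : Finset ι} (c : ι → ℝ) {F : ι → SpaceTime n → ℝ}
    (hF : ∀ j ∈ s, ContDiffAt ℝ 2 (F j) p) :
    lap (fun x => ∑ j ∈ s, c j * F j x) p = ∑ j ∈ s, c j * lap (F j) p := by
  have hsecond (i : Fin n) : ∂ₓ[i] (∂ₓ[i] fun x => ∑ j ∈ s, c j * F j x) p =
      ∑ j ∈ s, c j * ∂ₓ[i] (∂ₓ[i] (F j)) p := by
    have hfirst : ∂ₓ[i] (fun x => ∑ j ∈ s, c j * F j x) =ᶠ[𝓝 p]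
        fun x => ∑ j ∈ s, c j * ∂ₓ[i] (F j) x := by
      filter_upwards [(eventually_all_finset s).2 fun j hj => (hF j hj).eventually (by simp)]
        with x hx
      exact dirDeriv_sum_const_mul c fun j hj => (hx j hj).differentiableAt two_ne_zero
    rw [(dirDeriv_congr hfirst _).eq_of_nhds]
    exact dirDeriv_sum_const_mul c fun j hj =>
      (contDiffAt_dirDeriv (k := 1) (hF j hj) _).differentiableAt one_ne_zero
  simp only [lap, hsecond, Finset.mul_sum]
  exact Finset.sum_comm

lemma heatOp_dirDeriv (hf : ContDiffAt ℝ 3 f p) (v : SpaceTime n) :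
    heatOp κ (dirDeriv v f) p = dirDeriv v (heatOp κ f) p := by
  have hd (w : SpaceTime n) : ContDiffAt ℝ 2 (dirDeriv w f) p := contDiffAt_dirDeriv (k := 2) hf w
  have hdd (w : SpaceTime n) : DifferentiableAt ℝ (dirDeriv w (dirDeriv w f)) p :=
    (contDiffAt_dirDeriv (k := 1) (hd w) w).differentiableAt one_ne_zero
  have hcomm (w : SpaceTime n) : dirDeriv w (dirDeriv v f) =ᶠ[𝓝 p] dirDeriv v (dirDeriv w f) := by
    filter_upwards [hf.eventually (by simp)] with x hx
    exact dirDeriv_comm (hx.of_le (by norm_num)) w v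
  have hlap : lap (dirDeriv v f) p = dirDeriv v (lap f) p := by
    unfold lap
    rw [dirDeriv_sum fun i _ => hdd _]
    refine Finset.sum_congr rfl fun i _ => ?_
    rw [(dirDeriv_congr (hcomm _) _).eq_of_nhds, dirDeriv_comm (hd _)]
  have hlapdiff : DifferentiableAt ℝ (lap f) p := DifferentiableAt.fun_sum fun i _ => hdd _
  have htime := (hd timeVec).differentiableAt two_ne_zero
  unfold heatOp
  rw [dirDeriv_add hlapdiff (htime.const_mul κ),
    dirDeriv_mul (differentiableAt_const κ) htime, dirDeriv_const, mul_zero, add_zero, hlap,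
    (hcomm timeVec).eq_of_nhds]

lemma heatOp_zero_left : heatOp 0 f p = lap f p := by rw [heatOp, zero_mul, add_zero]

lemma lap_dirDeriv (hf : ContDiffAt ℝ 3 f p) (v : SpaceTime n) :
    lap (dirDeriv v f) p = dirDeriv v (lap f) p := by
  have h := heatOp_dirDeriv (κ := 0) hf v
  rwa [heatOp_zero_left, funext fun x => heatOp_zero_left (f := f) (p := x)] at h

/-- The divergence `∑ᵢ ∂ᵢFᵢ` in the space variables. -/
def divergence (F : Fin n → SpaceTime n → ℝ) (p : SpaceTime n) : ℝ := ∑ i, ∂ₓ[i] (F i) p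

lemma contDiffAt_divergence {k : ℕ} {F : Fin n → SpaceTime n → ℝ}
    (hF : ∀ i, ContDiffAt ℝ (k + 1) (F i) p) : ContDiffAt ℝ k (divergence F) p :=
  ContDiffAt.sum fun i _ => contDiffAt_dirDeriv (hF i) _

lemma lap_divergence {F : Fin n → SpaceTime n → ℝ} (hF : ∀ i, ContDiffAt ℝ 3 (F i) p) :
    lap (divergence F) p = divergence (fun i => lap (F i)) p := by
  have h := lap_sum_const_mul (s := Finset.univ) (fun _ => 1) fun i _ =>
    contDiffAt_dirDeriv (k := 2) (hF i) (spaceVec i)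
  simp only [one_mul] at h
  exact h.trans (Finset.sum_congr rfl fun i _ => lap_dirDeriv (hF i) _)

/-- The components of the rotated gradient `R ∇f`, the operator `A` of the adjoint system. -/
def rotGrad (R : Matrix (Fin n) (Fin n) ℝ) (f : SpaceTime n → ℝ) (i : Fin n) (p : SpaceTime n) :
    ℝ :=
  ∑ j, R i j * ∂ₓ[j] f p

lemma contDiffAt_rotGrad {k : ℕ} (hf : ContDiffAt ℝ (k + 1) f p) (i : Fin n) :
    ContDiffAt ℝ k (rotGrad R f i) p :=
  ContDiffAt.sum fun _ _ => contDiffAt_const.mul (contDiffAt_dirDeriv hf _)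

lemma lap_rotGrad (hf : ContDiffAt ℝ 3 f p) (i : Fin n) :
    lap (rotGrad R f i) p = rotGrad R (lap f) i p :=
  (lap_sum_const_mul (R i) fun j _ => contDiffAt_dirDeriv (k := 2) hf (spaceVec j)).trans
    (Finset.sum_congr rfl fun _ _ => by rw [lap_dirDeriv hf])

lemma rotGrad_congr (h : f =ᶠ[𝓝 p] g) (i : Fin n) : rotGrad R f i p = rotGrad R g i p :=
  Finset.sum_congr rfl fun _ _ => by rw [(dirDeriv_congr h _).eq_of_nhds]

lemma sum_mul_sum_mul_of_orthogonal (hR : R * R.transpose = 1) (x : Fin n → ℝ) (j : Fin n) :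
    ∑ i, R i j * ∑ l, R i l * x l = x j := by
  have h : R.transpose.mulVec (R.mulVec x) = x := by
    rw [Matrix.mulVec_mulVec, mul_eq_one_comm.1 hR, Matrix.one_mulVec]
  exact congrFun h j

lemma sq_rotGrad_le_gradSq (hR : R * R.transpose = 1) (i : Fin n) :
    rotGrad R f i p ^ 2 ≤ gradSq f p := by
  have hrow : ∑ j, R i j ^ 2 = 1 := by
    simpa [Matrix.mul_apply, sq] using congrFun (congrFun hR i) i
  simpa only [hrow, one_mul, rotGrad, gradSq] using
    Finset.sum_mul_sq_le_sq_mul_sq Finset.univ (R i) fun j => ∂ₓ[j] f p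

lemma energy_add_le (hf : DifferentiableAt ℝ f p) (hg : DifferentiableAt ℝ g p) :
    energy (fun x => f x + g x) p ≤ 2 * (energy f p + energy g p) := by
  simp only [energy, gradSq, dirDeriv_add hf hg]
  have hgrad := Finset.sum_le_sum fun i (_ : i ∈ Finset.univ) =>
    add_sq_le (a := ∂ₓ[i] f p) (b := ∂ₓ[i] g p)
  simp only [← Finset.mul_sum, Finset.sum_add_distrib] at hgrad
  linarith [add_sq_le (a := f p) (b := g p)]

lemma energy_sub_le (hf : DifferentiableAt ℝ f p) (hg : DifferentiableAt ℝ g p) :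
    energy (fun x => f x - g x) p ≤ 2 * (energy f p + energy g p) := by
  have hneg : energy (fun x => -g x) p = energy g p := by simp [energy, gradSq, dirDeriv]
  simpa only [sub_eq_add_neg, hneg] using energy_add_le hf hg.fun_neg

lemma energy_mul_le (hf : DifferentiableAt ℝ f p) (hg : DifferentiableAt ℝ g p) :
    energy (fun x => f x * g x) p ≤ 2 * energy f p * energy g p := by
  simp only [energy, gradSq, dirDeriv_mul hf hg]
  have hgrad := Finset.sum_le_sum fun i (_ : i ∈ Finset.univ) =>
    add_sq_le (a := f p * ∂ₓ[i] g p) (b := g p * ∂ₓ[i] f p)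
  simp only [mul_pow, ← Finset.mul_sum, Finset.sum_add_distrib] at hgrad
  have hf₁ := gradSq_nonneg (u := f) (p := p)
  have hg₁ := gradSq_nonneg (u := g) (p := p)
  unfold gradSq at hf₁ hg₁
  nlinarith [mul_nonneg hf₁ hg₁, mul_nonneg (sq_nonneg (f p)) (sq_nonneg (g p))]

lemma energy_sum_le {ι : Type*} {s : Finset ι} {F : ι → SpaceTime n → ℝ}
    (hF : ∀ j ∈ s, DifferentiableAt ℝ (F j) p) :
    energy (fun x => ∑ j ∈ s, F j x) p ≤ s.card * ∑ j ∈ s, energy (F j) p := by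
  have hgrad := Finset.sum_le_sum fun i (_ : i ∈ Finset.univ) =>
    sq_sum_le_card_mul_sum_sq (s := s) (f := fun j => ∂ₓ[i] (F j) p)
  rw [← Finset.mul_sum, Finset.sum_comm] at hgrad
  simp only [energy, gradSq, dirDeriv_sum hF, Finset.sum_add_distrib, mul_add]
  exact add_le_add sq_sum_le_card_mul_sum_sq hgrad

lemma energy_divergence_mul_le {a : Fin n → SpaceTime n → ℝ} (hψ : ContDiffAt ℝ 2 ψ p)
    (ha : ∀ i, ContDiffAt ℝ 2 (a i) p)
    (hA : ∀ i, energy (a i) p ≤ A ∧ energy (∂ₓ[i] (a i)) p ≤ A) :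
    energy (divergence fun i x => ψ x * a i x) p ≤
      4 * n * A * (∑ i, energy (∂ₓ[i] ψ) p + n * energy ψ p) := by
  have hdψ (i : Fin n) : DifferentiableAt ℝ (∂ₓ[i] ψ) p :=
    (contDiffAt_dirDeriv (k := 1) hψ _).differentiableAt one_ne_zero
  have hda (i : Fin n) : DifferentiableAt ℝ (∂ₓ[i] (a i)) p :=
    (contDiffAt_dirDeriv (k := 1) (ha i) _).differentiableAt one_ne_zero
  have hψ₁ := hψ.differentiableAt two_ne_zero
  have ha₁ (i : Fin n) := (ha i).differentiableAt two_ne_zero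
  have hterm (i : Fin n) : energy (fun x => ψ x * ∂ₓ[i] (a i) x + a i x * ∂ₓ[i] ψ x) p ≤
      4 * A * (energy (∂ₓ[i] ψ) p + energy ψ p) := by
    have h₁ := energy_mul_le hψ₁ (hda i)
    have h₂ := energy_mul_le (ha₁ i) (hdψ i)
    nlinarith [energy_add_le (hψ₁.fun_mul (hda i)) ((ha₁ i).fun_mul (hdψ i)),
      mul_le_mul_of_nonneg_left (hA i).2 (energy_nonneg (u := ψ) (p := p)),
      mul_le_mul_of_nonneg_right (hA i).1 (energy_nonneg (u := ∂ₓ[i] ψ) (p := p))]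
  have hleibniz : (divergence fun i x => ψ x * a i x) =ᶠ[𝓝 p]
      fun x => ∑ i, (ψ x * ∂ₓ[i] (a i) x + a i x * ∂ₓ[i] ψ x) := by
    filter_upwards [hψ.eventually (by simp),
      eventually_all.2 fun i => (ha i).eventually (by simp)] with x hx hx'
    exact Finset.sum_congr rfl fun i _ =>
      dirDeriv_mul (hx.differentiableAt two_ne_zero) ((hx' i).differentiableAt two_ne_zero)
  calc energy (divergence fun i x => ψ x * a i x) p
    _ ≤ n * ∑ i, energy (fun x => ψ x * ∂ₓ[i] (a i) x + a i x * ∂ₓ[i] ψ x) p := by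
      rw [(energy_congr hleibniz).eq_of_nhds]
      simpa only [Finset.card_univ, Fintype.card_fin] using energy_sum_le (s := Finset.univ)
        fun i _ => (hψ₁.fun_mul (hda i)).fun_add ((ha₁ i).fun_mul (hdψ i))
    _ ≤ n * ∑ i, 4 * A * (energy (∂ₓ[i] ψ) p + energy ψ p) := by gcongr with i; exact hterm i
    _ = 4 * n * A * (∑ i, energy (∂ₓ[i] ψ) p + n * energy ψ p) := by
      simp only [← Finset.mul_sum, Finset.sum_add_distrib, Finset.sum_const, Finset.card_univ,
        Fintype.card_fin, nsmul_eq_mul]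
      ring

lemma exists_eventually_energy_le {a : Fin n → SpaceTime n → ℝ} (ha : ∀ i, ContDiff ℝ 2 (a i))
    (y₀ : SpaceTime n) :
    ∃ A, ∀ᶠ p in 𝓝 y₀, ∀ i, energy (a i) p ≤ A ∧ energy (∂ₓ[i] (a i)) p ≤ A := by
  have hcont : ContinuousAt (fun p => ∑ i, (energy (a i) p + energy (∂ₓ[i] (a i)) p)) y₀ :=
    (continuous_finsetSum _ fun i _ => (continuous_energy ((ha i).of_le one_le_two)).add
      (continuous_energy (contDiff_dirDeriv (k := 1) (ha i) _))).continuousAt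
  obtain ⟨A, hA⟩ := exists_gt (∑ i, (energy (a i) y₀ + energy (∂ₓ[i] (a i)) y₀))
  refine ⟨A, (hcont.eventually_lt_const hA).mono fun p hp i => ?_⟩
  have hi := Finset.single_le_sum (f := fun i => energy (a i) p + energy (∂ₓ[i] (a i)) p)
    (fun _ _ => add_nonneg energy_nonneg energy_nonneg) (Finset.mem_univ i)
  have h₁ := energy_nonneg (u := a i) (p := p)
  have h₂ := energy_nonneg (u := ∂ₓ[i] (a i)) (p := p)
  constructor <;> linarith

end VectorCalculus

section AdjointSystem

variable {n : ℕ} {R : Matrix (Fin n) (Fin n) ℝ} {v w : Fin n → SpaceTime n → ℝ}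
  {T ψ q : SpaceTime n → ℝ} {k : Fin n} {U : Set (SpaceTime n)} {p : SpaceTime n} {A : ℝ}

/-- The triple `(ψ, q, w)` is a `C³` solution on `U` of the transformed adjoint Boussinesq system
`∂ₜψ + Δψ + div(ψv) = w_k`, `-Δw + R∇q = ψR∇T`, `div(Rᵗw) = 0`. -/
structure IsAdjointSolution (R : Matrix (Fin n) (Fin n) ℝ) (v : Fin n → SpaceTime n → ℝ)
    (T : SpaceTime n → ℝ) (k : Fin n) (U : Set (SpaceTime n)) (ψ q : SpaceTime n → ℝ)
    (w : Fin n → SpaceTime n → ℝ) : Prop where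
  contDiffOn_temperature : ContDiffOn ℝ 3 ψ U
  contDiffOn_pressure : ContDiffOn ℝ 3 q U
  contDiffOn_velocity : ∀ i, ContDiffOn ℝ 3 (w i) U
  heat : ∀ p ∈ U, heatOp 1 ψ p + divergence (fun i x => ψ x * v i x) p = w k p
  stokes : ∀ p ∈ U, ∀ i, -lap (w i) p + rotGrad R q i p = ψ p * rotGrad R T i p
  incompressible : ∀ p ∈ U, divergence (fun i x => ∑ j, R j i * w j x) p = 0

namespace IsAdjointSolution

variable (h : IsAdjointSolution R v T k U ψ q w) (hp : p ∈ U)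
include h hp

lemma rotGrad_pressure_eq_zero (hψ : p ∉ tsupport ψ) (hw : p ∉ tsupport (w k)) :
    rotGrad R q k p = 0 := by
  have hstokes := h.stokes p hp k
  rwa [lap_eq_zero_of_notMem_tsupport hw, image_eq_zero_of_notMem_tsupport hψ, neg_zero, zero_add,
    zero_mul] at hstokes

lemma sq_lap_velocity_le (hR : R * R.transpose = 1)
    (hA : ∀ i, energy (∂ₓ[i] T) p ≤ A) (i : Fin n) :
    lap (w i) p ^ 2 ≤ 2 * (energy (rotGrad R q i) p + n * A * energy ψ p) := by
  have hrot : rotGrad R T i p ^ 2 ≤ n * A := by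
    refine (sq_rotGrad_le_gradSq hR i).trans ?_
    simpa [gradSq] using Finset.sum_le_sum fun j (_ : j ∈ Finset.univ) => sq_le_energy.trans (hA j)
  have hlap : lap (w i) p = rotGrad R q i p - ψ p * rotGrad R T i p := by
    linarith [h.stokes p hp i]
  rw [hlap]
  nlinarith [sq_nonneg (rotGrad R q i p + ψ p * rotGrad R T i p),
    sq_le_energy (u := rotGrad R q i) (p := p), mul_le_mul_of_nonneg_left hrot (sq_nonneg (ψ p)),
    mul_le_mul_of_nonneg_right (sq_le_energy (u := ψ) (p := p)) ((sq_nonneg _).trans hrot)]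

variable (hU : IsOpen U)
include hU

lemma contDiffAt_temperature : ContDiffAt ℝ 3 ψ p :=
  h.contDiffOn_temperature.contDiffAt (hU.mem_nhds hp)

lemma contDiffAt_pressure : ContDiffAt ℝ 3 q p :=
  h.contDiffOn_pressure.contDiffAt (hU.mem_nhds hp)

lemma contDiffAt_velocity (i : Fin n) : ContDiffAt ℝ 3 (w i) p :=
  (h.contDiffOn_velocity i).contDiffAt (hU.mem_nhds hp)

lemma lap_velocity_rotated_back (hR : R * R.transpose = 1) (i : Fin n) :
    lap (fun x => ∑ j, R j i * w j x) p = ∂ₓ[i] q p - ψ p * ∂ₓ[i] T p := by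
  have hlap (j : Fin n) : lap (w j) p = ∑ l, R j l * (∂ₓ[l] q p - ψ p * ∂ₓ[l] T p) := by
    have hstokes := h.stokes p hp j
    simp only [rotGrad, Finset.mul_sum] at hstokes
    simp only [mul_sub, Finset.sum_sub_distrib, mul_left_comm _ (ψ p)]
    linarith
  rw [lap_sum_const_mul (fun j => R j i) fun j _ =>
    (h.contDiffAt_velocity hp hU j).of_le (by norm_num)]
  simp only [hlap]
  exact sum_mul_sum_mul_of_orthogonal hR (fun l => ∂ₓ[l] q p - ψ p * ∂ₓ[l] T p) i

lemma lap_pressure (hR : R * R.transpose = 1) (hT : ContDiff ℝ 3 T) :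
    lap q p = divergence (fun i x => ψ x * ∂ₓ[i] T x) p := by
  have hrot (i : Fin n) : ∂ₓ[i] (lap fun x => ∑ j, R j i * w j x) p =
      ∂ₓ[i] (∂ₓ[i] q) p - ∂ₓ[i] (fun x => ψ x * ∂ₓ[i] T x) p := by
    have hdq : DifferentiableAt ℝ (∂ₓ[i] q) p :=
      (contDiffAt_dirDeriv (k := 2) (h.contDiffAt_pressure hp hU) _).differentiableAt two_ne_zero
    have hdT : DifferentiableAt ℝ (∂ₓ[i] T) p :=
      (contDiffAt_dirDeriv (k := 2) hT.contDiffAt _).differentiableAt two_ne_zero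
    have hψ := (h.contDiffAt_temperature hp hU).differentiableAt three_ne_zero
    have heq : (lap fun x => ∑ j, R j i * w j x) =ᶠ[𝓝 p]
        fun x => ∂ₓ[i] q x - ψ x * ∂ₓ[i] T x := by
      filter_upwards [hU.mem_nhds hp] with x hx using h.lap_velocity_rotated_back hx hU hR i
    rw [(dirDeriv_congr heq _).eq_of_nhds, dirDeriv_sub hdq (hψ.fun_mul hdT)]
  have hzero : lap (divergence fun i x => ∑ j, R j i * w j x) p = 0 := by
    refine lap_eq_zero_of_notMem_tsupport (notMem_tsupport_iff_eventuallyEq.2 ?_)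
    filter_upwards [hU.mem_nhds hp] using h.incompressible
  rw [lap_divergence fun i => ContDiffAt.sum fun j _ =>
    contDiffAt_const.mul (h.contDiffAt_velocity hp hU j)] at hzero
  simp only [divergence, hrot, Finset.sum_sub_distrib] at hzero
  exact sub_eq_zero.1 hzero

lemma sq_lap_rotGrad_pressure_le (hR : R * R.transpose = 1) (hT : ContDiff ℝ 3 T) (i : Fin n) :
    lap (rotGrad R q i) p ^ 2 ≤ energy (divergence fun i x => ψ x * ∂ₓ[i] T x) p := by
  have heq : lap q =ᶠ[𝓝 p] divergence fun i x => ψ x * ∂ₓ[i] T x := by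
    filter_upwards [hU.mem_nhds hp] with x hx using h.lap_pressure hx hU hR hT
  rw [lap_rotGrad (h.contDiffAt_pressure hp hU), rotGrad_congr heq]
  exact (sq_rotGrad_le_gradSq hR i).trans (le_add_of_nonneg_left (sq_nonneg _))

lemma heatOp_temperature_eventuallyEq :
    heatOp 1 ψ =ᶠ[𝓝 p] fun x => w k x - divergence (fun i x => ψ x * v i x) x := by
  filter_upwards [hU.mem_nhds hp] with x hx
  linarith [h.heat x hx]

lemma notMem_tsupport_velocity (hψ : p ∉ tsupport ψ) : p ∉ tsupport (w k) := by
  refine notMem_tsupport_iff_eventuallyEq.2 ?_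
  filter_upwards [hU.mem_nhds hp, (isClosed_tsupport ψ).isOpen_compl.mem_nhds hψ] with x hx hxψ
  have hdiv : divergence (fun i x => ψ x * v i x) x = 0 :=
    Finset.sum_eq_zero fun i _ => dirDeriv_eq_zero_of_notMem_tsupport fun hmem =>
      hxψ (closure_mono (Function.support_mul_subset_left _ _) hmem)
  rw [← h.heat x hx, heatOp_eq_zero_of_notMem_tsupport hxψ, hdiv, add_zero, Pi.zero_apply]

end IsAdjointSolution

/-- The unknowns of the closed elliptic-parabolic system satisfied by `∇ψ`, `ψ`, `w_k` and the
`k`-th component of `R∇q`. -/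
def unknowns (R : Matrix (Fin n) (Fin n) ℝ) (k : Fin n) (ψ q : SpaceTime n → ℝ)
    (w : Fin n → SpaceTime n → ℝ) : Fin n ⊕ Fin 3 → SpaceTime n → ℝ :=
  Sum.elim (fun j => ∂ₓ[j] ψ) ![ψ, w k, rotGrad R q k]

/-- The coefficient of `∂ₜ` in the equation for each of the `unknowns`. -/
def timeCoeff (n : ℕ) : Fin n ⊕ Fin 3 → ℝ := Sum.elim 1 ![1, 0, 0]

lemma timeCoeff_mem_Icc (l : Fin n ⊕ Fin 3) : timeCoeff n l ∈ Icc (0 : ℝ) 1 := by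
  obtain _ | j := l
  · simp [timeCoeff]
  · fin_cases j <;> simp [timeCoeff]

lemma energy_le_sum_energy_unknowns (m : Fin n ⊕ Fin 3) :
    energy (unknowns R k ψ q w m) p ≤ ∑ m, energy (unknowns R k ψ q w m) p :=
  Finset.single_le_sum (f := fun m => energy (unknowns R k ψ q w m) p)
    (fun _ _ => energy_nonneg) (Finset.mem_univ m)

lemma sum_energy_unknowns : ∑ m, energy (unknowns R k ψ q w m) p =
    ∑ i, energy (∂ₓ[i] ψ) p + (energy ψ p + energy (w k) p + energy (rotGrad R q k) p) := by
  simp [unknowns, Fin.sum_univ_three]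

lemma energy_divergence_mul_le_sum_unknowns {a : Fin n → SpaceTime n → ℝ}
    (hψ : ContDiffAt ℝ 2 ψ p) (ha : ∀ i, ContDiffAt ℝ 2 (a i) p) (hA : 0 ≤ A)
    (haA : ∀ i, energy (a i) p ≤ A ∧ energy (∂ₓ[i] (a i)) p ≤ A) :
    energy (divergence fun i x => ψ x * a i x) p ≤
      4 * n * A * (1 + n) * ∑ m, energy (unknowns R k ψ q w m) p := by
  refine (energy_divergence_mul_le hψ ha haA).trans ?_
  rw [mul_assoc (4 * n * A), sum_energy_unknowns]
  have hG : 0 ≤ ∑ i, energy (∂ₓ[i] ψ) p := Finset.sum_nonneg fun _ _ => energy_nonneg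
  have hψ₀ := energy_nonneg (u := ψ) (p := p)
  have hw₀ := energy_nonneg (u := w k) (p := p)
  have hq₀ := energy_nonneg (u := rotGrad R q k) (p := p)
  gcongr
  nlinarith [(Nat.cast_nonneg n : (0 : ℝ) ≤ n)]

namespace IsAdjointSolution

lemma contDiffOn_unknowns (h : IsAdjointSolution R v T k U ψ q w) (hU : IsOpen U)
    (l : Fin n ⊕ Fin 3) : ContDiffOn ℝ 2 (unknowns R k ψ q w l) U := by
  intro p hp
  refine ContDiffAt.contDiffWithinAt ?_
  have hψ := h.contDiffAt_temperature hp hU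
  match l with
  | .inl j => exact contDiffAt_dirDeriv (k := 2) hψ _
  | .inr 0 => exact hψ.of_le (by norm_num)
  | .inr 1 => exact (h.contDiffAt_velocity hp hU k).of_le (by norm_num)
  | .inr 2 => exact contDiffAt_rotGrad (k := 2) (h.contDiffAt_pressure hp hU) k

variable (h : IsAdjointSolution R v T k U ψ q w) (hp : p ∈ U) (hU : IsOpen U)
include h hp hU

lemma unknowns_eq_zero (hψ : p ∉ tsupport ψ) (l : Fin n ⊕ Fin 3) :
    unknowns R k ψ q w l p = 0 := by
  have hw := h.notMem_tsupport_velocity hp hU hψ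
  match l with
  | .inl _ => exact dirDeriv_eq_zero_of_notMem_tsupport hψ
  | .inr 0 => exact image_eq_zero_of_notMem_tsupport hψ
  | .inr 1 => exact image_eq_zero_of_notMem_tsupport hw
  | .inr 2 => exact h.rotGrad_pressure_eq_zero hp hψ hw

lemma energy_heat_source_le (hv : ∀ i, ContDiff ℝ 2 (v i))
    (hvA : ∀ i, energy (v i) p ≤ A ∧ energy (∂ₓ[i] (v i)) p ≤ A) :
    energy (fun x => w k x - divergence (fun i x => ψ x * v i x) x) p ≤
      (2 + 8 * n * A * (1 + n)) * ∑ m, energy (unknowns R k ψ q w m) p := by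
  have hψ : ContDiffAt ℝ 2 ψ p := (h.contDiffAt_temperature hp hU).of_le (by norm_num)
  have hw := (h.contDiffAt_velocity hp hU k).differentiableAt three_ne_zero
  have hdiv : DifferentiableAt ℝ (divergence fun i x => ψ x * v i x) p :=
    (contDiffAt_divergence (k := 1) fun i => hψ.mul (hv i).contDiffAt).differentiableAt one_ne_zero
  have hwE : energy (w k) p ≤ ∑ m, energy (unknowns R k ψ q w m) p :=
    energy_le_sum_energy_unknowns (.inr 1)
  linarith [energy_sub_le hw hdiv, energy_divergence_mul_le_sum_unknowns (R := R) (k := k)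
    (q := q) (w := w) hψ (fun i => (hv i).contDiffAt) (energy_nonneg.trans (hvA k).1) hvA]

lemma sq_heatOp_unknowns_le (hR : R * R.transpose = 1) (hv : ∀ i, ContDiff ℝ 2 (v i))
    (hT : ContDiff ℝ 3 T) (hvA : ∀ i, energy (v i) p ≤ A ∧ energy (∂ₓ[i] (v i)) p ≤ A)
    (hTA : ∀ i, energy (∂ₓ[i] T) p ≤ A ∧ energy (∂ₓ[i] (∂ₓ[i] T)) p ≤ A) (l : Fin n ⊕ Fin 3) :
    heatOp (timeCoeff n l) (unknowns R k ψ q w l) p ^ 2 ≤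
      (2 + 8 * n * A * (1 + n)) * ∑ m, energy (unknowns R k ψ q w m) p := by
  have hA : 0 ≤ A := energy_nonneg.trans (hvA k).1
  have hψ := h.contDiffAt_temperature hp hU
  have hsource := h.energy_heat_source_le hp hU hv hvA
  have hdiv := energy_divergence_mul_le_sum_unknowns (R := R) (k := k) (q := q) (w := w)
    (hψ.of_le (by norm_num)) (fun i => contDiffAt_dirDeriv (k := 2) hT.contDiffAt _) hA hTA
  have hheat := h.heatOp_temperature_eventuallyEq hp hU
  have hψE : energy ψ p ≤ ∑ m, energy (unknowns R k ψ q w m) p :=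
    energy_le_sum_energy_unknowns (.inr 0)
  have hqE : energy (rotGrad R q k) p ≤ ∑ m, energy (unknowns R k ψ q w m) p :=
    energy_le_sum_energy_unknowns (.inr 2)
  generalize ∑ m, energy (unknowns R k ψ q w m) p = E at *
  have hE : 0 ≤ E := energy_nonneg.trans hψE
  have hnA : 0 ≤ n * A := by positivity
  have hnnAE : 0 ≤ n * (n * A) * E := by positivity
  match l with
  | .inl j =>
    change heatOp 1 (∂ₓ[j] ψ) p ^ 2 ≤ _
    rw [heatOp_dirDeriv hψ, (dirDeriv_congr hheat _).eq_of_nhds]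
    exact (sq_dirDeriv_le_energy j).trans hsource
  | .inr 0 =>
    change heatOp 1 ψ p ^ 2 ≤ _
    rw [hheat.eq_of_nhds]
    exact sq_le_energy.trans hsource
  | .inr 1 =>
    change heatOp 0 (w k) p ^ 2 ≤ _
    rw [heatOp_zero_left]
    nlinarith [h.sq_lap_velocity_le hp hR (fun i => (hTA i).1) k,
      mul_le_mul_of_nonneg_left hψE hnA, mul_nonneg hnA hE]
  | .inr 2 =>
    change heatOp 0 (rotGrad R q k) p ^ 2 ≤ _
    rw [heatOp_zero_left]
    nlinarith [h.sq_lap_rotGrad_pressure_le hp hU hR hT k, mul_nonneg hnA hE]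

end IsAdjointSolution

theorem exists_nhds_forall_isAdjointSolution_eq_zero {y₀ : SpaceTime n} {σ : SpaceTime n → ℝ}
    {W : Set (SpaceTime n)} (hR : R * R.transpose = 1) (hv : ∀ i, ContDiff ℝ 2 (v i))
    (hT : ContDiff ℝ 3 T) (k : Fin n) (hU : IsOpen U) (hy₀ : y₀ ∈ U) (hσ : ContDiffAt ℝ 2 σ y₀)
    (hσ₀ : σ y₀ = 0) (hgrad : ∃ i, ∂ₓ[i] σ y₀ ≠ 0) (hW : W ∈ 𝓝 y₀) :
    ∃ V ∈ 𝓝 y₀, ∀ ψ q w, IsAdjointSolution R v T k U ψ q w →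
      (∀ p ∈ W, σ p < 0 → ψ p = 0) → ∀ p ∈ V, ψ p = 0 := by
  obtain ⟨A₁, hA₁⟩ := exists_eventually_energy_le hv y₀
  obtain ⟨A₂, hA₂⟩ := exists_eventually_energy_le
    (fun i => contDiff_dirDeriv (k := 2) hT (spaceVec i)) y₀
  have hA : 0 ≤ max A₁ A₂ :=
    le_max_of_le_left (energy_nonneg.trans (hA₁.self_of_nhds k).1)
  have hnear : ∀ᶠ p in 𝓝 y₀, p ∈ U ∧ W ∈ 𝓝 p ∧ ContinuousAt σ p ∧
      (∀ i, energy (v i) p ≤ A₁ ∧ energy (∂ₓ[i] (v i)) p ≤ A₁) ∧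
      ∀ i, energy (∂ₓ[i] T) p ≤ A₂ ∧ energy (∂ₓ[i] (∂ₓ[i] T)) p ≤ A₂ := by
    filter_upwards [hU.mem_nhds hy₀, eventually_mem_nhds_iff.2 hW, hσ.eventually (by simp), hA₁,
      hA₂] with p h₁ h₂ h₃ h₄ h₅ using ⟨h₁, h₂, h₃.continuousAt, h₄, h₅⟩
  obtain ⟨V, hV, hzero⟩ := exists_nhds_forall_eq_zero hσ hσ₀ hgrad timeCoeff_mem_Icc
    (by positivity : 0 ≤ 2 + 8 * n * max A₁ A₂ * (1 + n)) hnear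
  refine ⟨V, hV, fun ψ q w h hvan p hp => hzero (unknowns R k ψ q w)
    (fun l => (h.contDiffOn_unknowns hU l).mono fun p hp => hp.1) ?_ ?_ p hp (.inr 0)⟩
  · rintro p ⟨hpU, -, -, h₁, h₂⟩
    exact h.sq_heatOp_unknowns_le hpU hU hR hv hT
      (fun i => ⟨(h₁ i).1.trans (le_max_left _ _), (h₁ i).2.trans (le_max_left _ _)⟩)
      (fun i => ⟨(h₂ i).1.trans (le_max_right _ _), (h₂ i).2.trans (le_max_right _ _)⟩)
  · rintro p ⟨hpU, hpW, hcont, -⟩ hσp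
    refine h.unknowns_eq_zero hpU hU (notMem_tsupport_iff_eventuallyEq.2 ?_)
    filter_upwards [hpW, hcont.eventually_lt_const hσp] with x hxW hx using hvan x hxW hx

end AdjointSystem

section Coordinates

variable {f : ℝ × E3 → ℝ} {p y₀ : ℝ × E3} {r : ℝ}

lemma pdx_eq_dirDeriv (hf : DifferentiableAt ℝ f p) (i : Fin 3) : pdx i f p = ∂ₓ[i] f p := by
  have hslice : HasFDerivAt (fun y : E3 => (p.1, y)) (ContinuousLinearMap.inr ℝ ℝ E3) p.2 :=
    hasFDerivAt_prodMk_right p.1 p.2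
  have hcomp := HasFDerivAt.comp (g := f) p.2 hf.hasFDerivAt hslice
  exact congrArg (· (EuclideanSpace.single i (1 : ℝ))) hcomp.fderiv

lemma pdt_eq_dirDeriv (hf : DifferentiableAt ℝ f p) : pdt f p = ∂ₜ f p :=
  (HasFDerivAt.comp_hasDerivAt (l := f) p.1 hf.hasFDerivAt
    ((hasDerivAt_id p.1).prodMk (hasDerivAt_const p.1 p.2))).deriv

lemma laplx_eq_lap (hf : ContDiffAt ℝ 2 f p) : laplx f p = lap f p := by
  refine Finset.sum_congr rfl fun i _ => ?_
  have hd : DifferentiableAt ℝ (∂ₓ[i] f) p :=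
    (contDiffAt_dirDeriv (k := 1) hf _).differentiableAt one_ne_zero
  have hslice : Tendsto (fun y : E3 => (p.1, y)) (𝓝 p.2) (𝓝 p) :=
    (continuous_const.prodMk continuous_id).tendsto' _ _ rfl
  have hfirst : (fun y => pd i (fun z => f (p.1, z)) y) =ᶠ[𝓝 p.2] fun y => ∂ₓ[i] f (p.1, y) := by
    filter_upwards [hslice.eventually (hf.eventually (by simp))] with y hy
    exact pdx_eq_dirDeriv (p := (p.1, y)) (hy.differentiableAt two_ne_zero) i
  rw [← pdx_eq_dirDeriv hd, pd, hfirst.fderiv_eq, pdx, pd]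

lemma nhds_basis_ballB (y₀ : ℝ × E3) : (𝓝 y₀).HasBasis (0 < ·) (ballB · y₀) := by
  let toPi : ℝ × E3 ≃ₜ ℝ × (Fin 3 → ℝ) :=
    (Homeomorph.refl ℝ).prodCongr (PiLp.homeomorph 2 fun _ => ℝ)
  rw [toPi.isInducing.nhds_eq_comap]
  refine (Metric.nhds_basis_closedBall.comap toPi).congr (fun _ => Iff.rfl) fun r hr => ?_
  ext p
  exact max_le_iff.trans (and_congr_right' (dist_pi_le_iff hr.le))

lemma exists_ballB_subset {S : Set (ℝ × E3)} (hS : S ∈ 𝓝 y₀) :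
    ∃ ε ∈ Ioo (0 : ℝ) 1, ballB ε y₀ ⊆ S := by
  obtain ⟨ε, hε, hsub⟩ := (nhds_basis_ballB y₀).mem_iff.1 hS
  refine ⟨min ε 2⁻¹, ⟨by positivity, (min_le_right _ _).trans_lt (by norm_num)⟩, fun p hp => ?_⟩
  exact hsub ⟨hp.1.trans (min_le_left _ _), fun i => (hp.2 i).trans (min_le_left _ _)⟩

lemma cylW_subset_ballB (hr : r ∈ Ioo (0 : ℝ) 1) : cylW r y₀ ⊆ ballB r y₀ :=
  fun _ hp => ⟨hp.1.trans (pow_le_of_le_one hr.1.le hr.2.le two_ne_zero), hp.2⟩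

lemma cylW_mem_nhds (hr : r ∈ Ioo (0 : ℝ) 1) : cylW r y₀ ∈ 𝓝 y₀ :=
  (nhds_basis_ballB y₀).mem_iff.2 ⟨r ^ 2, pow_pos hr.1 2, fun _ hp =>
    ⟨hp.1, fun i => (hp.2 i).trans (pow_le_of_le_one hr.1.le hr.2.le two_ne_zero)⟩⟩

lemma isAdjointSolution_of_forall_eq {R : Matrix (Fin 3) (Fin 3) ℝ} {v w : Fin 3 → ℝ × E3 → ℝ}
    {T ψ q : ℝ × E3 → ℝ} {k : Fin 3} {U : Set (ℝ × E3)} (hv : ∀ i, Differentiable ℝ (v i))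
    (hT : Differentiable ℝ T) (hU : IsOpen U) (hψ : ContDiffOn ℝ 3 ψ U) (hq : ContDiffOn ℝ 3 q U)
    (hw : ∀ i, ContDiffOn ℝ 3 (w i) U)
    (heat : ∀ p ∈ U, pdt ψ p + laplx ψ p + (∑ i, pdx i (fun r => ψ r * v i r) p) = w k p)
    (stokes : ∀ p ∈ U, ∀ i,
      -laplx (w i) p + (∑ j, R i j * pdx j q p) = ψ p * ∑ j, R i j * pdx j T p)
    (incompressible : ∀ p ∈ U, (∑ i, pdx i (fun r => ∑ j, R j i * w j r) p) = 0) :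
    IsAdjointSolution R v T k U ψ q w := by
  have hat {f : ℝ × E3 → ℝ} (hf : ContDiffOn ℝ 3 f U) {p : ℝ × E3} (hp : p ∈ U) :
      ContDiffAt ℝ 2 f p := (hf.contDiffAt (hU.mem_nhds hp)).of_le (by norm_num)
  have hdiff {f : ℝ × E3 → ℝ} (hf : ContDiffOn ℝ 3 f U) {p : ℝ × E3} (hp : p ∈ U) :
      DifferentiableAt ℝ f p := (hat hf hp).differentiableAt two_ne_zero
  refine ⟨hψ, hq, hw, fun p hp => ?_, fun p hp i => ?_, fun p hp => ?_⟩
  · rw [← heat p hp, heatOp, pdt_eq_dirDeriv (hdiff hψ hp), laplx_eq_lap (hat hψ hp), one_mul,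
      divergence, add_comm (∂ₜ ψ p)]
    exact congrArg _ (Finset.sum_congr rfl fun i _ =>
      (pdx_eq_dirDeriv ((hdiff hψ hp).fun_mul (hv i p)) i).symm)
  · simpa only [rotGrad, laplx_eq_lap (hat (hw i) hp), pdx_eq_dirDeriv (hdiff hq hp),
      pdx_eq_dirDeriv (hT p)] using stokes p hp i
  · rw [← incompressible p hp]
    exact Finset.sum_congr rfl fun i _ => (pdx_eq_dirDeriv
      (DifferentiableAt.fun_sum fun j _ => (hdiff (hw j) hp).const_mul _) i).symm

end Coordinates

theorem statement15_general
    (R : Matrix (Fin 3) (Fin 3) ℝ) (hR : R * R.transpose = 1)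
    (v : Fin 3 → ℝ × E3 → ℝ) (T : ℝ × E3 → ℝ)
    (hv : ∀ i, ContDiff ℝ 2 (v i)) (hT : ContDiff ℝ 3 T)
    (y0 : ℝ × E3) (U : Set (ℝ × E3)) (hU : U ∈ nhds y0) (hUopen : IsOpen U) (k : Fin 3)
    (σf : ℝ × E3 → ℝ) (hσf : ContDiffAt ℝ 2 σf y0) (hσ0 : σf y0 = 0)
    (hσgrad : ∃ i : Fin 3, pdx i σf y0 ≠ 0) :
    ∃ ε ∈ Ioo (0 : ℝ) 1, ∃ r ∈ Ioo (0 : ℝ) 1, cylW r y0 ⊆ U ∧ ballB ε y0 ⊆ U ∧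
      ∀ (ψ q : ℝ × E3 → ℝ) (w : Fin 3 → ℝ × E3 → ℝ),
        ContDiffOn ℝ 3 ψ U → ContDiffOn ℝ 3 q U → (∀ i, ContDiffOn ℝ 3 (w i) U) →
        (∀ p ∈ U, pdt ψ p + laplx ψ p + (∑ i, pdx i (fun r => ψ r * v i r) p) = w k p) →
        (∀ p ∈ U, ∀ i, -laplx (w i) p + (∑ j, R i j * pdx j q p)
          = ψ p * ∑ j, R i j * pdx j T p) →
        (∀ p ∈ U, (∑ i, pdx i (fun r => ∑ j, R j i * w j r) p) = 0) →
        (∀ p ∈ cylW r y0, σf p < 0 → ψ p = 0) → ∀ p ∈ ballB ε y0, ψ p = 0 := by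
  obtain ⟨r, hr, hrU⟩ := exists_ballB_subset hU
  have hσdiff := hσf.differentiableAt two_ne_zero
  obtain ⟨V, hV, huniq⟩ := exists_nhds_forall_isAdjointSolution_eq_zero hR hv hT k hUopen
    (mem_of_mem_nhds hU) hσf hσ0 (by simpa only [pdx_eq_dirDeriv hσdiff] using hσgrad)
    (cylW_mem_nhds hr)
  obtain ⟨ε, hε, hεV⟩ := exists_ballB_subset (inter_mem hU hV)
  refine ⟨ε, hε, r, hr, (cylW_subset_ballB hr).trans hrU, fun p hp => (hεV hp).1,
    fun ψ q w hψ hq hw heat stokes incompressible hvan p hp => ?_⟩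
  have hsol := isAdjointSolution_of_forall_eq (fun i => (hv i).differentiable two_ne_zero)
    (hT.differentiable three_ne_zero) hUopen hψ hq hw heat stokes incompressible
  exact huniq ψ q w hsol hvan p (hεV hp).2

/-- Property (P), Section 5.3: local unique continuation for the
transformed adjoint system.  Consider, near a point `y⁰ = (t⁰,x⁰)` with
`0 < x₃⁰ < 1`, the system `∂_t ψ + Δψ + div(ψv) = w₃`, `−Δw + Aq = ψ A T`,
`A*w = 0`, where `A f = R∇f` for a constant orthogonal matrix `R` and
`A* z = −div(Rᵗ z)`, with smooth data `v, T`.  For any smooth `σ` with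
`σ(y⁰) = 0` and `∇_x σ(y⁰) ≠ 0` there are `ε, r ∈ (0,1)` such that if `ψ` vanishes
on `{σ < 0} ∩ W_r(y⁰)` then `ψ ≡ 0` on `B_ε(y⁰)`. -/
theorem statement15
    (R : Matrix (Fin 3) (Fin 3) ℝ) (hR : R * R.transpose = 1)
    (v : Fin 3 → ℝ × E3 → ℝ) (T : ℝ × E3 → ℝ)
    (hv : ∀ i, ContDiff ℝ (⊤ : ℕ∞) (v i)) (hT : ContDiff ℝ (⊤ : ℕ∞) T)
    (y0 : ℝ × E3) (hy0 : y0.2 2 ∈ Ioo (0 : ℝ) 1)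
    (U : Set (ℝ × E3)) (hU : U ∈ nhds y0) (hUopen : IsOpen U)
    (ψ q : ℝ × E3 → ℝ) (w : Fin 3 → ℝ × E3 → ℝ)
    (hψ : ContDiffOn ℝ (⊤ : ℕ∞) ψ U) (hq : ContDiffOn ℝ (⊤ : ℕ∞) q U)
    (hw : ∀ i, ContDiffOn ℝ (⊤ : ℕ∞) (w i) U)
    -- `∂_t ψ + Δψ + div(ψ v) = w₃` on `U`
    (heq1 : ∀ p ∈ U,
      pdt ψ p + laplx ψ p + (∑ i : Fin 3, pdx i (fun r => ψ r * v i r) p) = w 2 p)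
    -- `−Δw + A q = ψ A T` on `U`, `A f = R ∇f`
    (heq2 : ∀ p ∈ U, ∀ i : Fin 3,
      -laplx (w i) p + (∑ j : Fin 3, R i j * pdx j q p)
        = ψ p * ∑ j : Fin 3, R i j * pdx j T p)
    -- `A* w = −div(Rᵗ w) = 0` on `U`
    (heq3 : ∀ p ∈ U,
      (∑ i : Fin 3, pdx i (fun r => ∑ j : Fin 3, R j i * w j r) p) = 0)
    -- the hypersurface `{σ = 0}`
    (σf : ℝ × E3 → ℝ) (hσf : ContDiff ℝ (⊤ : ℕ∞) σf) (hσ0 : σf y0 = 0)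
    (hσgrad : ∃ i : Fin 3, pdx i σf y0 ≠ 0) :
    ∃ ε ∈ Ioo (0 : ℝ) 1, ∃ r ∈ Ioo (0 : ℝ) 1,
      cylW r y0 ⊆ U ∧ ballB ε y0 ⊆ U ∧
      ((∀ p ∈ cylW r y0, σf p < 0 → ψ p = 0) →
        ∀ p ∈ ballB ε y0, ψ p = 0) := by
  obtain ⟨ε, hε, r, hr, hcyl, hball, huniq⟩ := statement15_general R hR v T
    (fun i => contDiff_infty.1 (hv i) 2) (contDiff_infty.1 hT 3) y0 U hU hUopen 2 σf
    (contDiff_infty.1 hσf 2).contDiffAt hσ0 hσgrad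
  exact ⟨ε, hε, r, hr, hcyl, hball, huniq ψ q w (contDiffOn_infty.1 hψ 3) (contDiffOn_infty.1 hq 3)
    (fun i => contDiffOn_infty.1 (hw i) 3) heq1 heq2 heq3⟩
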